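/- arXiv:1404.4852 — 6 statements merged into one kernel-verified Lean document; each statement's English description precedes it below -/
import Mathlib

section
/- Let r ≥ 1 and n ≥ 4. Suppose that for every polynomial Q' of total degree at most 2 in n-1 variables (x'_1, …, x'_{n-2}, z') over Z_{2^r}, all natural numbers q' ≤ r and v' ≤ r, all elements k', w', g', u' ∈ Z_{2^r}, and every polynomial T' of total degree at most 1 in x'_1, …, x'_{n-2}, the sum Σ_{i=0}^{2^{q'} - 1} Σ_{j=0}^{2^{v'} - 1} #(k' + w' 2^{r-q'} i + g' 2^{r-v'} j)_{Q', z' = T'(x') + u' 2^{r-v'} j} is divisible by 2^{⌈(r(n-2) + min(2v', r))/2⌉ + q' - 1}. Then for every polynomial Q of total degree at most 2 in n variables (x_1, …, x_{n-1}, z) over Z_{2^r}, all natural numbers q ≤ r and v ≤ r, all elements k, w, g, u ∈ Z_{2^r}, and every polynomial T of total degree at most 1 in x_1, …, x_{n-1}, the sum Σ_{i=0}^{2^q - 1} Σ_{j=0}^{2^v - 1} #(k + w 2^{r-q} i + g 2^{r-v} j)_{Q, z = T(x) + u 2^{r-v} j} is divisible by 2^{⌈(r(n-1) + min(2v, r))/2⌉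 + q - 1}. -/
/-!
Lift to `ℤ` and substitute for `z`: then `x` and `j` range over a single box with dyadic sides, on
which a quadratic function `f` is evaluated with the coordinate `j` dilated by `2 ^ (r - v)`.
Summing over `i` amounts to lowering the modulus.

Zeros modulo `2 ^ p` are counted by induction on `p`. Fixing the last binary digits of the undilated
coordinates, `f` becomes `c + 2 * L + 4 * q` in the remaining digits. If `L` is odd in some
direction, Hensel lifting solves uniquely in that direction; otherwise `c` must be divisible by `4`,
and dividing by `4` lowers the modulus to `2 ^ (p - 2)`. The case `p = 1` is a quadratic Gauss sum.
-/

open Finset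

section QuadraticFunctions

variable {R M : Type*} [CommRing R] [AddCommGroup M] [Module R M]

/-- Polynomial functions of degree at most two on a module. -/
def IsQuadraticFunction (f : M → R) : Prop :=
  ∃ (c : R) (L : M →ₗ[R] R) (q : QuadraticForm R M), ∀ x, f x = c + L x + q x

namespace IsQuadraticFunction

variable {f g : M → R}

theorem add (hf : IsQuadraticFunction f) (hg : IsQuadraticFunction g) :
    IsQuadraticFunction (f + g) := by
  obtain ⟨c, L, q, hf⟩ := hf
  obtain ⟨c', L', q', hg⟩ := hg
  refine ⟨c + c', L + L', q + q', fun x ↦ ?_⟩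
  simp only [Pi.add_apply, hf, hg, LinearMap.add_apply, add_apply]
  ring

theorem const_smul (a : R) (hf : IsQuadraticFunction f) : IsQuadraticFunction (a • f) := by
  obtain ⟨c, L, q, hf⟩ := hf
  refine ⟨a * c, a • L, a • q, fun x ↦ ?_⟩
  simp only [Pi.smul_apply, hf, smul_eq_mul, LinearMap.smul_apply, smul_apply]
  ring

theorem exists_taylor (hf : IsQuadraticFunction f) (a : M) :
    ∃ (L : M →ₗ[R] R) (q : QuadraticForm R M), ∀ h, f (a + h) = f a + L h + q h := by
  obtain ⟨c, L, q, hf⟩ := hf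
  refine ⟨L + q.polarBilin a, q, fun h ↦ ?_⟩
  rw [hf, hf, map_add L, QuadraticMap.map_add q, LinearMap.add_apply,
    QuadraticMap.polarBilin_apply_apply]
  ring

theorem dvd_sub_add_smul (hf : IsQuadraticFunction f) (n : R) (x y : M) :
    n ∣ f (x + n • y) - f x := by
  obtain ⟨L, q, hLq⟩ := hf.exists_taylor x
  refine ⟨L y + n * q y, ?_⟩
  rw [hLq, map_smul, QuadraticMap.map_smul]
  simp only [smul_eq_mul]
  ring

theorem comp_linearMap {N : Type*} [AddCommGroup N] [Module R N] (hf : IsQuadraticFunction f)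
    (φ : N →ₗ[R] M) :
    IsQuadraticFunction (f ∘ φ) := by
  obtain ⟨c, L, q, hf⟩ := hf
  exact ⟨c, L ∘ₗ φ, q.comp φ, fun x ↦ hf (φ x)⟩

end IsQuadraticFunction

theorem isQuadraticFunction_prod_monomial {σ : Type*} (s : σ →₀ ℕ) (hs : s.degree ≤ 2) :
    IsQuadraticFunction fun x : σ → R ↦ s.prod fun i k ↦ x i ^ k := by
  classical
  have prod_eq (x : σ → R) : (s.prod fun i k ↦ x i ^ k) = (s.toMultiset.map x).prod := by
    rw [Finsupp.toMultiset_map, Finsupp.prod_toMultiset, Finsupp.prod_mapDomain_index] <;>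
      simp [pow_add]
  have card_le : s.toMultiset.card ≤ 2 := by
    rwa [Finsupp.card_toMultiset]
  simp only [prod_eq]
  generalize s.toMultiset = m at card_le
  obtain h | h | h : m.card = 0 ∨ m.card = 1 ∨ m.card = 2 := by omega
  · rw [Multiset.card_eq_zero.1 h]
    exact ⟨1, 0, 0, by simp⟩
  · obtain ⟨i, rfl⟩ := Multiset.card_eq_one.1 h
    exact ⟨0, LinearMap.proj i, 0, by simp⟩
  · obtain ⟨i, j, rfl⟩ := Multiset.card_eq_two.1 h
    exact ⟨0, 0, QuadraticMap.linMulLin (LinearMap.proj i) (LinearMap.proj j), by simp⟩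

end QuadraticFunctions

section Polynomials

open MvPolynomial

theorem exists_isQuadraticFunction_lift {σ R A : Type*} [CommRing R] [CommRing A]
    (φ : R →+* A) (hφ : Function.Surjective φ) (P : MvPolynomial σ A) (hP : P.totalDegree ≤ 2) :
    ∃ f : (σ → R) → R, IsQuadraticFunction f ∧ ∀ x, φ (f x) = P.eval (φ ∘ x) := by
  choose lift hlift using hφ
  refine ⟨∑ s ∈ P.support, lift (P.coeff s) • fun x ↦ s.prod fun i k ↦ x i ^ k,
    Finset.sum_induction _ IsQuadraticFunction (fun _ _ ↦ .add) ⟨0, 0, 0, by simp⟩ fun s hs ↦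
      .const_smul _ <| isQuadraticFunction_prod_monomial s ?_, fun x ↦ ?_⟩
  · exact (le_totalDegree hs).trans hP
  · simp [eval_eq, hlift, Finsupp.prod]

theorem totalDegree_aeval_le {σ τ A : Type*} [CommSemiring A] (g : σ → MvPolynomial τ A)
    (hg : ∀ i, (g i).totalDegree ≤ 1) (P : MvPolynomial σ A) :
    (aeval g P).totalDegree ≤ P.totalDegree := by
  rw [aeval_def, eval₂_eq]
  refine totalDegree_finsetSum_le fun s hs ↦ ?_
  calc (algebraMap A (MvPolynomial τ A) (P.coeff s) * ∏ i ∈ s.support, g i ^ s i).totalDegree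
      ≤ 0 + (∏ i ∈ s.support, g i ^ s i).totalDegree := by
        simpa using totalDegree_mul (C (P.coeff s))
          (∏ i ∈ s.support, g i ^ s i)
    _ ≤ ∑ i ∈ s.support, s i := by
        rw [zero_add]
        refine (totalDegree_finsetProd _ _).trans (sum_le_sum fun i _ ↦ ?_)
        exact (totalDegree_pow _ _).trans
          (mul_le_of_le_one_right (Nat.zero_le _) (hg i))
    _ ≤ P.totalDegree := le_totalDegree hs

theorem totalDegree_C_mul_X_le {σ A : Type*} [CommSemiring A] (a : A) (i : σ) :
    (C a * X i).totalDegree ≤ 1 := by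
  rw [C_mul_X_eq_monomial]
  exact (totalDegree_monomial_le _ _).trans (by simp)

theorem eval_aeval {σ τ A : Type*} [CommSemiring A] (y : τ → A) (g : σ → MvPolynomial τ A)
    (P : MvPolynomial σ A) :
    (aeval g P).eval y = P.eval fun i ↦ (g i).eval y := by
  have eval_comp_C : (eval y).comp C = RingHom.id A :=
    RingHom.ext fun a ↦ eval_C a
  rw [map_aeval, algebraMap_eq, eval_comp_C]
  rfl

theorem exists_totalDegree_le_two_eval_eq {A : Type*} [CommRing A] {n : ℕ}
    {Q : MvPolynomial (Fin n) A} (hQ : Q.totalDegree ≤ 2) {T : MvPolynomial (Fin (n - 1)) A}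
    (hT : T.totalDegree ≤ 1) (k g u : A) :
    ∃ P : MvPolynomial (Option (Fin (n - 1))) A, P.totalDegree ≤ 2 ∧
      ∀ (x : Fin (n - 1) → A) (s : A), P.eval (fun o ↦ o.elim s x) =
        eval (fun t : Fin n ↦ if h : (t : ℕ) < n - 1 then x ⟨t, h⟩
          else eval x T + u * s) Q - (k + g * s) := by
  let subst (t : Fin n) : MvPolynomial (Option (Fin (n - 1))) A :=
    if h : (t : ℕ) < n - 1 then X (some ⟨t, h⟩)
    else rename some T + C u * X none
  have totalDegree_subst (t : Fin n) : (subst t).totalDegree ≤ 1 := by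
    unfold subst
    split_ifs
    · exact (totalDegree_monomial_le _ _).trans (by simp)
    · exact (totalDegree_add _ _).trans
        (max_le ((totalDegree_rename_le _ _).trans hT) (totalDegree_C_mul_X_le u none))
  refine ⟨aeval subst Q - (C k + C g * X none),
    ?_, fun x s ↦ ?_⟩
  · refine (totalDegree_sub _ _).trans
      (max_le ((totalDegree_aeval_le subst totalDegree_subst Q).trans hQ) ?_)
    refine (totalDegree_add _ _).trans (max_le (by simp) ?_)
    exact (totalDegree_C_mul_X_le g none).trans one_le_two
  · have eval_subst (t : Fin n) : (subst t).eval (fun o ↦ o.elim s x) =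
        if h : (t : ℕ) < n - 1 then x ⟨t, h⟩ else eval x T + u * s := by
      unfold subst
      split_ifs
      · simp
      · simp [eval_rename, Function.comp_def]
    simp only [map_sub, map_add, map_mul, eval_C, eval_X, eval_aeval,
      eval_subst, Option.elim_none]

end Polynomials

section Boxes

theorem card_Ico_two_pow (V : ℕ) : #(Ico (0 : ℤ) (2 ^ V)) = 2 ^ V := by
  rw [Int.card_Ico, sub_zero]
  norm_cast

variable {ι : Type*} [Fintype ι] [DecidableEq ι]

/-- The integer box `∏ i, [0, 2 ^ V i)`, a system of representatives of `∏ i, ℤ / 2 ^ V i`. -/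
noncomputable def dyadicBox (V : ι → ℕ) : Finset (ι → ℤ) :=
  Fintype.piFinset fun i ↦ Ico 0 (2 ^ V i)

theorem mem_dyadicBox {V : ι → ℕ} {x : ι → ℤ} : x ∈ dyadicBox V ↔ ∀ i, 0 ≤ x i ∧ x i < 2 ^ V i := by
  simp only [dyadicBox, Fintype.mem_piFinset, mem_Ico]

theorem card_dyadicBox (V : ι → ℕ) : #(dyadicBox V) = 2 ^ ∑ i, V i := by
  rw [dyadicBox, Fintype.card_piFinset, ← prod_pow_eq_pow_sum]
  exact prod_congr rfl fun i _ ↦ card_Ico_two_pow _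

/-- The dilation multiplying the `i`-th coordinate by `2 ^ d i`. -/
noncomputable def dilation (d : ι → ℕ) : (ι → ℤ) →ₗ[ℤ] ι → ℤ :=
  LinearMap.pi fun i ↦ (2 ^ d i : ℤ) • LinearMap.proj i

theorem dilation_apply {ι : Type*} (d : ι → ℕ) (y : ι → ℤ) (i : ι) :
    dilation d y i = 2 ^ d i * y i := rfl

variable {S : Type*} [AddCommMonoid S]

theorem sum_dyadicBox_add (U V : ι → ℕ) (φ : (ι → ℤ) → S) :
    ∑ x ∈ dyadicBox (U + V), φ x = ∑ a ∈ dyadicBox U, ∑ y ∈ dyadicBox V, φ (a + dilation U y) := by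
  rw [← sum_product']
  refine sum_nbij' (fun x ↦ (fun i ↦ x i % 2 ^ U i, fun i ↦ x i / 2 ^ U i))
    (fun z ↦ z.1 + dilation U z.2) ?_ ?_ ?_ ?_ ?_
  · intro x hx
    rw [mem_dyadicBox] at hx
    rw [mem_product, mem_dyadicBox, mem_dyadicBox]
    refine ⟨fun i ↦ ⟨Int.emod_nonneg _ (by positivity), Int.emod_lt_of_pos _ (by positivity)⟩,
      fun i ↦ ⟨Int.ediv_nonneg (hx i).1 (by positivity), Int.ediv_lt_of_lt_mul (by positivity) ?_⟩⟩
    rw [mul_comm, ← pow_add]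
    exact (hx i).2
  · rintro ⟨a, y⟩ h
    rw [mem_product, mem_dyadicBox, mem_dyadicBox] at h
    refine mem_dyadicBox.2 fun i ↦ ?_
    obtain ⟨⟨ha₀, ha⟩, hy₀, hy⟩ := And.intro (h.1 i) (h.2 i)
    simp only [Pi.add_apply, dilation_apply, pow_add]
    constructor
    · positivity
    · nlinarith [pow_pos (zero_lt_two (α := ℤ)) (U i)]
  · intro x _
    ext i
    exact Int.emod_add_mul_ediv _ _
  · rintro ⟨a, y⟩ h
    rw [mem_product, mem_dyadicBox] at h
    ext i
    · simp [dilation_apply, Int.emod_eq_of_lt (h.1 i).1 (h.1 i).2]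
    · simp [dilation_apply, Int.add_mul_ediv_left, Int.ediv_eq_zero_of_lt (h.1 i).1 (h.1 i).2]
  · intro x _
    congr 1
    ext i
    exact (Int.emod_add_mul_ediv _ _).symm

theorem sum_dyadicBox_eq_sum_update (V : ι → ℕ) (i : ι) (φ : (ι → ℤ) → S) :
    ∑ x ∈ dyadicBox V, φ x =
      ∑ y ∈ dyadicBox (Function.update V i 0), ∑ t ∈ Ico 0 (2 ^ V i), φ (y + Pi.single i t) := by
  rw [← sum_product']
  have single_add (x : ι → ℤ) : Function.update x i 0 + Pi.single i (x i) = x := by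
    ext j
    obtain rfl | hj := eq_or_ne j i <;> simp [*]
  refine sum_nbij' (fun x ↦ (Function.update x i 0, x i)) (fun z ↦ z.1 + Pi.single i z.2)
    ?_ ?_ (fun x _ ↦ single_add x) ?_ (fun x _ ↦ by rw [single_add])
  · intro x hx
    rw [mem_dyadicBox] at hx
    refine mem_product.2 ⟨mem_dyadicBox.2 fun j ↦ ?_, mem_Ico.2 (hx i)⟩
    obtain rfl | hj := eq_or_ne j i <;> simp [*]
  · rintro ⟨y, t⟩ h
    rw [mem_product, mem_dyadicBox, mem_Ico] at h
    refine mem_dyadicBox.2 fun j ↦ ?_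
    have hy := h.1 j
    obtain rfl | hj := eq_or_ne j i
    · simp only [Function.update_self, pow_zero] at hy
      have : y j = 0 := by omega
      simpa [this] using h.2
    · simpa [hj] using hy
  · rintro ⟨y, t⟩ h
    rw [mem_product, mem_dyadicBox] at h
    have hy : y i = 0 := by
      have := h.1 i
      simp only [Function.update_self, pow_zero] at this
      omega
    ext j
    · obtain rfl | hj := eq_or_ne j i <;> simp [*]
    · simp [hy]

theorem sum_dyadicBox_eq_sum_zmod (V : ι → ℕ) (φ : (ι → ℤ) → S) :
    ∑ x ∈ dyadicBox V, φ x = ∑ g : ∀ i, ZMod (2 ^ V i), φ fun i ↦ (g i).val := by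
  have val_cast {x : ι → ℤ} (hx : x ∈ dyadicBox V) (i : ι) :
      ((x i : ZMod (2 ^ V i)).val : ℤ) = x i := by
    obtain ⟨h₀, h⟩ := mem_dyadicBox.1 hx i
    rw [ZMod.val_intCast, Int.emod_eq_of_lt h₀ (mod_cast h)]
  refine sum_nbij' (fun x i ↦ (x i : ZMod (2 ^ V i))) (fun g i ↦ ((g i).val : ℤ)) ?_ ?_ ?_ ?_ ?_
  · simp
  · exact fun g _ ↦ mem_dyadicBox.2 fun i ↦ ⟨by positivity, mod_cast ZMod.val_lt (g i)⟩
  · intro x hx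
    ext i
    exact val_cast hx i
  · intro g _
    ext i
    simp
  · intro x hx
    congr 1
    ext i
    exact (val_cast hx i).symm

theorem sum_dyadicBox_option {κ : Type*} [Fintype κ] [DecidableEq κ] (V : Option κ → ℕ)
    (φ : (Option κ → ℤ) → S) :
    ∑ y ∈ dyadicBox V, φ y =
      ∑ x ∈ dyadicBox (V ∘ some), ∑ t ∈ Ico 0 (2 ^ V none), φ fun o ↦ o.elim t x := by
  rw [← sum_product']
  have elim_eq (y : Option κ → ℤ) : (fun o : Option κ ↦ o.elim (y none) (y ∘ some)) = y := by
    ext (_ | _) <;> rfl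
  refine sum_nbij' (fun y ↦ (y ∘ some, y none)) (fun z o ↦ o.elim z.2 z.1)
    ?_ ?_ (fun y _ ↦ elim_eq y) (fun _ _ ↦ rfl) (fun y _ ↦ by rw [elim_eq])
  · exact fun y hy ↦ mem_product.2 ⟨mem_dyadicBox.2 fun i ↦ mem_dyadicBox.1 hy (some i),
      mem_Ico.2 (mem_dyadicBox.1 hy none)⟩
  · rintro ⟨x, t⟩ h
    rw [mem_product, mem_dyadicBox, mem_Ico] at h
    exact mem_dyadicBox.2 (Option.forall.2 ⟨h.2, h.1⟩)

end Boxes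

theorem card_Ico_dvd_add_odd {m V : ℕ} (hm : m ≤ V) (c : ℤ) {D : ℤ} (hD : Odd D) (B : ℤ) :
    #{t ∈ Ico (0 : ℤ) (2 ^ V) | 2 ^ m ∣ c + (t * D + 2 * t ^ 2 * B)} = 2 ^ (V - m) := by
  let ψ (t : ZMod (2 ^ m)) : ZMod (2 ^ m) := t * D + 2 * t ^ 2 * B
  have ψ_intCast (t : ℤ) : ψ t = (t * D + 2 * t ^ 2 * B : ℤ) := by
    push_cast
    rfl
  have ψ_injective : Function.Injective ψ := by
    intro t s h
    obtain ⟨t, rfl⟩ := ZMod.intCast_surjective t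
    obtain ⟨s, rfl⟩ := ZMod.intCast_surjective s
    rw [ψ_intCast, ψ_intCast, ZMod.intCast_eq_intCast_iff_dvd_sub] at h
    rw [ZMod.intCast_eq_intCast_iff_dvd_sub]
    have coprime : IsCoprime ((2 ^ m : ℕ) : ℤ) (D + 2 * ((s + t) * B)) := by
      push_cast
      exact IsCoprime.pow_left (Int.isCoprime_two_left.2 (hD.add_even (even_two_mul _)))
    refine coprime.dvd_of_dvd_mul_right (h.trans (dvd_of_eq ?_))
    ring
  obtain ⟨t₀, ht₀⟩ := Finite.surjective_of_injective ψ_injective (-c : ℤ)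
  obtain ⟨s, rfl⟩ := ZMod.intCast_surjective t₀
  have solution_iff (t : ℤ) : 2 ^ m ∣ c + (t * D + 2 * t ^ 2 * B) ↔ t ≡ s [ZMOD 2 ^ m] := by
    have h := ψ_injective.eq_iff (a := (t : ZMod (2 ^ m))) (b := s)
    rw [ht₀, ψ_intCast, eq_comm, ZMod.intCast_eq_intCast_iff_dvd_sub, ZMod.intCast_eq_intCast_iff,
      sub_neg_eq_add, add_comm] at h
    exact_mod_cast h
  simp only [solution_iff]
  have card_eq := Int.Ico_filter_modEq_card 0 (2 ^ V) (r := 2 ^ m) (by positivity) s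
  have split : ((2 ^ V : ℤ) - s : ℚ) / (2 ^ m : ℤ) =
      ((2 ^ (V - m) : ℤ) : ℚ) + ((0 : ℤ) - s) / (2 ^ m : ℤ) := by
    have := pow_sub_mul_pow (2 : ℚ) hm
    push_cast
    field_simp
    linarith
  rw [split, Int.ceil_intCast_add, add_sub_cancel_right, max_eq_left (by positivity)] at card_eq
  exact_mod_cast card_eq

theorem card_Ico_dvd_add_two_pow_mul_odd {e p V : ℕ} (hep : e ≤ p) (hp : p ≤ e + V) (Y : ℤ) {D : ℤ}
    (hD : Odd D) (B : ℤ) :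
    #{t ∈ Ico (0 : ℤ) (2 ^ V) | 2 ^ p ∣ Y + 2 ^ e * (t * D + 2 * t ^ 2 * B)} =
      2 ^ (V - (p - e)) * if 2 ^ e ∣ Y then 1 else 0 := by
  split_ifs with hY
  · obtain ⟨c, rfl⟩ := hY
    rw [mul_one, ← card_Ico_dvd_add_odd (by omega) c hD B]
    congr! 2 with t
    rw [← mul_add, ← Nat.add_sub_cancel' hep, pow_add, Nat.add_sub_cancel_left,
      mul_dvd_mul_iff_left (by positivity)]
  · rw [mul_zero, card_eq_zero, filter_eq_empty_iff]
    exact fun t _ h ↦ hY ((Int.dvd_add_left (dvd_mul_right _ _)).1 ((pow_dvd_pow 2 hep).trans h))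

theorem exists_card_Ico_dvd_sub_two_pow_mul {q r : ℕ} (hq : q ≤ r) (w : ℤ) :
    ∃ e ≤ r, r ≤ e + q ∧ ∀ Y : ℤ,
      #{i ∈ Ico (0 : ℤ) (2 ^ q) | 2 ^ r ∣ Y - w * 2 ^ (r - q) * i} =
        2 ^ (q - (r - e)) * if 2 ^ e ∣ Y then 1 else 0 := by
  by_cases hw : 2 ^ q ∣ w
  · obtain ⟨w, rfl⟩ := hw
    refine ⟨r, le_rfl, by omega, fun Y ↦ ?_⟩
    have dvd_iff (i : ℤ) : 2 ^ r ∣ Y - 2 ^ q * w * 2 ^ (r - q) * i ↔ 2 ^ r ∣ Y := by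
      refine dvd_sub_left ⟨w * i, ?_⟩
      rw [← Nat.add_sub_cancel' hq, pow_add, Nat.add_sub_cancel_left]
      ring
    simp only [dvd_iff]
    split_ifs with h
    · simp only [h, filter_true, card_Ico_two_pow, Nat.sub_self, Nat.sub_zero, mul_one]
    · simp only [h, filter_false, card_empty, mul_zero]
  · have hw₀ : w ≠ 0 := by
      rintro rfl
      exact hw (dvd_zero _)
    obtain ⟨b, hab, hb⟩ := FiniteMultiplicity.exists_eq_pow_mul_and_not_dvd
      (Int.finiteMultiplicity_iff.2 ⟨by decide, hw₀⟩ : FiniteMultiplicity 2 w)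
    rw [← even_iff_two_dvd, Int.not_even_iff_odd] at hb
    set a := multiplicity 2 w
    have ha : a < q := by
      by_contra! h
      rw [hab] at hw
      exact hw ((pow_dvd_pow 2 h).mul_right b)
    refine ⟨a + (r - q), by omega, by omega, fun Y ↦ ?_⟩
    rw [← card_Ico_dvd_add_two_pow_mul_odd (by omega) (by omega) Y hb.neg 0]
    congr! 3 with i
    rw [pow_add]
    linear_combination (-2 ^ (r - q) * i) * hab

section GaussSums

theorem card_dvd_sq_sum_of_mul_eq_addChar {G S : Type*} [AddCommGroup G] [Fintype G] [CommRing S]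
    [IsDomain S] (f c : G → S) (χ : G → AddChar G S)
    (h : ∀ x y, f x * f (x + y) = c y * χ y x) :
    (Fintype.card G : S) ∣ (∑ x, f x) ^ 2 := by
  classical
  have sq_eq : (∑ x, f x) ^ 2 = ∑ y, c y * ∑ x, χ y x := calc
    (∑ x, f x) ^ 2 = ∑ x, ∑ y, f x * f (x + y) := by
      rw [sq, sum_mul_sum]
      exact sum_congr rfl fun x _ ↦ (Equiv.sum_comp (Equiv.addLeft x) fun y ↦ f x * f y).symm
    _ = ∑ y, ∑ x, c y * χ y x := by
      rw [sum_comm]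
      simp only [h]
    _ = ∑ y, c y * ∑ x, χ y x := by simp only [mul_sum]
  rw [sq_eq]
  refine dvd_sum fun y _ ↦ Dvd.dvd.mul_left ?_ _
  rw [AddChar.sum_eq_ite]
  split_ifs
  · exact dvd_rfl
  · exact dvd_zero _

variable {G M : Type*} [AddCommGroup G] [Fintype G] [AddCommGroup M] {f : M → ℤ} {l : G → M}

theorem card_dvd_sq_sum_negOnePow (hf : IsQuadraticFunction f)
    (hl : ∀ x y, ∃ m, l (x + y) = l x + l y + (2 : ℤ) • m) :
    (Fintype.card G : ℤ) ∣ (∑ x, ((f (l x)).negOnePow : ℤ)) ^ 2 := by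
  have ⟨c, L, q, hcLq⟩ := hf
  have even_sub_of_add {g : M → ℤ} (hg : IsQuadraticFunction g) (x y : G) :
      Even (g (l (x + y)) - g (l x + l y)) := by
    obtain ⟨m, hm⟩ := hl x y
    rw [hm, even_iff_two_dvd]
    exact hg.dvd_sub_add_smul 2 _ _
  have even_polar_sub (y x x' : G) : Even (QuadraticMap.polar q (l y) (l (x + x')) -
      (QuadraticMap.polar q (l y) (l x) + QuadraticMap.polar q (l y) (l x'))) := by
    rw [← QuadraticMap.polar_add_right]
    exact even_sub_of_add ⟨0, q.polarBilin (l y), 0, by simp⟩ x x'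
  let polarChar (y : G) : AddChar G ℤ :=
    { toFun x := (QuadraticMap.polar q (l y) (l x)).negOnePow
      map_zero_eq_one' := by
        simpa [Int.negOnePow_eq_one_iff] using even_polar_sub y 0 0
      map_add_eq_mul' x x' := by
        rw [(Int.negOnePow_eq_iff _ _).2 (even_polar_sub y x x'), Int.negOnePow_add]
        push_cast
        rfl }
  refine card_dvd_sq_sum_of_mul_eq_addChar _ (fun y ↦ ((f (l y) - f 0).negOnePow : ℤ))
    polarChar fun x y ↦ ?_
  change _ = _ * ((QuadraticMap.polar q (l y) (l x)).negOnePow : ℤ)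
  rw [(Int.negOnePow_eq_iff _ _).2 (even_sub_of_add hf x y), ← Units.val_mul, ← Units.val_mul,
    ← Int.negOnePow_add, ← Int.negOnePow_add, Units.val_inj, Int.negOnePow_eq_iff]
  refine ⟨c + L (l x) + q (l x), ?_⟩
  simp only [hcLq, map_add L, QuadraticMap.map_add q (l x), map_zero,
    QuadraticMap.polar_comm q (l y)]
  ring

theorem two_pow_dvd_two_pow_half_mul {z : ℕ} {S : ℤ} (h : 2 ^ z ∣ S ^ 2) :
    2 ^ z ∣ 2 ^ (z / 2) * S := by
  rw [pow_dvd_iff_le_emultiplicity, emultiplicity_pow Int.prime_two] at h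
  rw [pow_dvd_iff_le_emultiplicity, emultiplicity_mul Int.prime_two,
    emultiplicity_pow_self_of_prime Int.prime_two]
  cases hS : emultiplicity 2 S with
  | top => simp
  | coe n =>
    rw [hS] at h
    norm_cast at h ⊢
    omega

end GaussSums

theorem two_dvd_val_add_sub {U : ℕ} (x y : ZMod (2 ^ U)) :
    (2 : ℤ) ∣ (x + y).val - (x.val + y.val) := by
  obtain rfl | hU := U.eq_zero_or_pos
  · have val_eq (z : ZMod (2 ^ 0)) : z.val = 0 := Nat.lt_one_iff.1 (ZMod.val_lt z)
    simp only [val_eq, Nat.cast_zero, add_zero, sub_zero, dvd_zero]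
  · have two_dvd : (2 : ℤ) ∣ (2 ^ U : ℕ) := mod_cast dvd_pow_self 2 hU.ne'
    rw [ZMod.val_add, ← dvd_neg, neg_sub]
    push_cast at two_dvd ⊢
    exact two_dvd.trans Int.dvd_self_sub_emod

theorem two_mul_ite_two_dvd (n : ℤ) : 2 * (if 2 ∣ n then 1 else 0 : ℤ) = 1 + n.negOnePow := by
  split_ifs with h
  · rw [Int.negOnePow_even _ (even_iff_two_dvd.2 h)]
    norm_num
  · rw [Int.negOnePow_odd _ (by rwa [← Int.not_even_iff_odd, even_iff_two_dvd])]
    norm_num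

theorem two_pow_dvd_mul_card_two_dvd {ι : Type*} [Fintype ι] [DecidableEq ι] {f : (ι → ℤ) → ℤ}
    (hf : IsQuadraticFunction f) (U : ι → ℕ) :
    2 ^ ∑ i, U i ∣ 2 ^ (1 + (∑ i, U i) / 2) * #{a ∈ dyadicBox U | 2 ∣ f a} := by
  let l (g : ∀ i, ZMod (2 ^ U i)) (i : ι) : ℤ := (g i).val
  have l_add (x y : ∀ i, ZMod (2 ^ U i)) : ∃ m, l (x + y) = l x + l y + (2 : ℤ) • m := by
    choose m hm using fun i ↦ two_dvd_val_add_sub (x i) (y i)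
    refine ⟨m, funext fun i ↦ ?_⟩
    simp only [l, Pi.add_apply, Pi.smul_apply, smul_eq_mul, ← hm]
    ring
  have card_eq : (Fintype.card (∀ i, ZMod (2 ^ U i)) : ℤ) = 2 ^ ∑ i, U i := by
    simp [Fintype.card_pi, ZMod.card, prod_pow_eq_pow_sum]
  have two_mul_card : 2 * (#{a ∈ dyadicBox U | 2 ∣ f a} : ℤ) =
      2 ^ (∑ i, U i) + ∑ g, ((f (l g)).negOnePow : ℤ) := by
    rw [card_filter, sum_dyadicBox_eq_sum_zmod, Nat.cast_sum, mul_sum]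
    simp only [Nat.cast_ite, Nat.cast_one, Nat.cast_zero, two_mul_ite_two_dvd, sum_add_distrib,
      sum_const, card_univ, nsmul_eq_mul, mul_one, card_eq, l]
  zify
  rw [pow_add, pow_one, mul_comm 2, mul_assoc, two_mul_card, mul_add]
  exact dvd_add (dvd_mul_left _ _) <| two_pow_dvd_two_pow_half_mul <|
    card_eq ▸ card_dvd_sq_sum_negOnePow hf l_add

section Defect

variable {ι : Type*} [Fintype ι] {d : ι → ℕ}

/-- The number of factors of two that the zero count of a quadratic function modulo `2 ^ p` may
lack. -/
def defect (p : ℕ) (d : ι → ℕ) : ℕ :=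
  1 + (∑ i, (p - 2 * d i)) / 2

theorem defect_zero (d : ι → ℕ) : defect 0 d = 1 := by
  simp only [defect, Nat.zero_sub, sum_const_zero, Nat.zero_div]

theorem sum_one_sub (d : ι → ℕ) : ∑ i, (1 - d i) = #{i | d i = 0} := by
  rw [card_filter]
  exact sum_congr rfl fun i _ ↦ by grind

theorem defect_one (d : ι → ℕ) : defect 1 d = 1 + #{i | d i = 0} / 2 := by
  rw [defect, ← sum_one_sub]
  congr 2
  exact sum_congr rfl fun i _ ↦ by omega

theorem defect_add_two (m : ℕ) (d : ι → ℕ) :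
    defect (m + 2) d = defect m (d - 1) + #{i | d i = 0} := by
  have sum_eq : ∑ i, (m + 2 - 2 * d i) = ∑ i, (m - 2 * (d - 1) i) + 2 * #{i | d i = 0} := by
    rw [← sum_one_sub, mul_sum, ← sum_add_distrib]
    exact sum_congr rfl fun i _ ↦ by simp only [Pi.sub_apply, Pi.one_apply]; omega
  simp only [defect, sum_eq]
  omega

theorem defect_add_sub_le (hd : 2 ≤ #{i | d i = 0}) {e m : ℕ} (hem : e ≤ m) :
    defect e d + (m - e) ≤ defect m d := by
  have sum_le : ∑ i, (e - 2 * d i) + (m - e) * #{i | d i = 0} ≤ ∑ i, (m - 2 * d i) := by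
    rw [← sum_one_sub, mul_sum, ← sum_add_distrib]
    refine sum_le_sum fun i _ ↦ ?_
    obtain h | h := (d i).eq_zero_or_pos
    · rw [h]
      omega
    · rw [Nat.sub_eq_zero_of_le h]
      omega
  have := Nat.mul_le_mul_left (m - e) hd
  simp only [defect]
  omega

theorem sum_eq_sum_sub_one_sub_add_card {V : ι → ℕ} (hV : 1 ≤ d + V) :
    ∑ i, V i = ∑ i, (V - (1 - d)) i + #{i | d i = 0} := by
  simp_rw [← sum_one_sub, ← sum_add_distrib]
  exact sum_congr rfl fun i _ ↦ (tsub_add_cancel_of_le (tsub_le_iff_left.2 (hV i))).symm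

end Defect

theorem exists_linearMap_dvd_sub_two_mul {ι : Type*} [Finite ι] [DecidableEq ι]
    {d : ι → ℕ} {m : ℕ} {L : (ι → ℤ) →ₗ[ℤ] ℤ} (hL : ∀ i, d i ≤ m → 2 ∣ L (Pi.single i 1)) :
    ∃ L' : (ι → ℤ) →ₗ[ℤ] ℤ, ∀ y, 2 ^ (m + 1) ∣ L (dilation d y) - 2 * L' (dilation d y) := by
  cases nonempty_fintype ι
  have coeff (i : ι) : ∃ b, 2 ^ (m + 1) ∣ 2 ^ d i * (L (Pi.single i 1) - 2 * b) := by
    by_cases hi : d i ≤ m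
    · obtain ⟨b, hb⟩ := hL i hi
      exact ⟨b, by simp [hb]⟩
    · exact ⟨0, (pow_dvd_pow 2 (by omega)).mul_right _⟩
  choose b hb using coeff
  refine ⟨∑ i, b i • LinearMap.proj i, fun y ↦ ?_⟩
  have L_eq (x : ι → ℤ) : L x = ∑ i, x i * L (Pi.single i 1) := by
    conv_lhs => rw [pi_eq_sum_univ' x]
    simp only [map_sum, map_smul, smul_eq_mul]
  rw [L_eq, LinearMap.sum_apply, mul_sum, ← sum_sub_distrib]
  refine dvd_sum fun i _ ↦ ((hb i).mul_right (y i)).trans (dvd_of_eq ?_)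
  simp only [dilation_apply, LinearMap.smul_apply, LinearMap.proj_apply, smul_eq_mul]
  ring

theorem dilation_dilation_one_sub {ι : Type*} (d : ι → ℕ) (y : ι → ℤ) :
    dilation d (dilation (1 - d) y) = (2 : ℤ) • dilation (d - 1) y := by
  ext i
  simp only [dilation_apply, Pi.smul_apply, Pi.sub_apply, Pi.one_apply, smul_eq_mul, ← mul_assoc,
    ← pow_add, ← pow_succ']
  congr 2
  omega

section ZeroCount

variable {ι : Type*} [Fintype ι] [DecidableEq ι] {d V : ι → ℕ} {m p : ℕ}

/-- The number of zeros modulo `2 ^ p` of `f` at the dilated points of a box. -/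
noncomputable def zeroCount (f : (ι → ℤ) → ℤ) (d V : ι → ℕ) (p : ℕ) : ℕ :=
  #{y ∈ dyadicBox V | 2 ^ p ∣ f (dilation d y)}

theorem zeroCount_eq_sum (f : (ι → ℤ) → ℤ) (d V : ι → ℕ) (p : ℕ) :
    zeroCount f d V p = ∑ y ∈ dyadicBox V, if 2 ^ p ∣ f (dilation d y) then 1 else 0 :=
  card_filter _ _

/-- Divisibility of all zero counts modulo `2 ^ p`, with dilation exponents `d`, by
`2 ^ (∑ i, V i - defect p d)`, where `2 ^ ∑ i, V i` is the size of the box. -/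
def ZeroCountDivisibility (p : ℕ) (d : ι → ℕ) : Prop :=
  ∀ ⦃f⦄, IsQuadraticFunction f → ∀ ⦃V : ι → ℕ⦄, (∀ i, p ≤ d i + V i) →
    2 ^ ∑ i, V i ∣ 2 ^ defect p d * zeroCount f d V p

theorem zeroCount_eq_ite {f : (ι → ℤ) → ℤ} {c : ℤ} (hf : ∀ y, 2 ^ p ∣ f (dilation d y) ↔ 2 ^ p ∣ c)
    (V : ι → ℕ) : zeroCount f d V p = 2 ^ (∑ i, V i) * if 2 ^ p ∣ c then 1 else 0 := by
  simp only [zeroCount_eq_sum, hf, sum_const, smul_eq_mul, card_dyadicBox]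

variable (c : ℤ) {L : (ι → ℤ) →ₗ[ℤ] ℤ} (q : QuadraticForm ℤ (ι → ℤ))

theorem ZeroCountDivisibility.of_even_linear (h : ZeroCountDivisibility m d)
    (hV : ∀ i, m ≤ d i + V i) (hL : ∀ i, d i ≤ m → 2 ∣ L (Pi.single i 1)) :
    2 ^ ∑ i, V i ∣
      2 ^ defect m d * zeroCount (fun x ↦ c + 2 * L x + 4 * q x) d V (m + 2) := by
  obtain ⟨L', hL'⟩ := exists_linearMap_dvd_sub_two_mul hL
  have dvd_iff (y : ι → ℤ) : 2 ^ (m + 2) ∣ c + 2 * L (dilation d y) + 4 * q (dilation d y) ↔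
      2 ^ (m + 2) ∣ c + 4 * (L' (dilation d y) + q (dilation d y)) := by
    refine dvd_iff_dvd_of_dvd_sub ?_
    have := mul_dvd_mul_left 2 (hL' y)
    rw [← pow_succ'] at this
    exact this.trans (dvd_of_eq (by ring))
  rw [zeroCount_eq_sum]
  simp only [dvd_iff]
  by_cases hc : 4 ∣ c
  · obtain ⟨c, rfl⟩ := hc
    simp only [← mul_add, pow_add, show (2 : ℤ) ^ 2 = 4 by rfl, mul_comm (_ ^ m),
      mul_dvd_mul_iff_left (show (4 : ℤ) ≠ 0 by decide)]
    rw [← zeroCount_eq_sum fun x ↦ c + (L' x + q x)]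
    exact h ⟨c, L', q, fun x ↦ by ring⟩ hV
  · have not_dvd (n : ℤ) : ¬ 2 ^ (m + 2) ∣ c + 4 * n := fun h ↦
      hc ((Int.dvd_add_left (dvd_mul_right _ _)).1 ((pow_dvd_pow 2 le_add_self).trans h))
    simp only [not_dvd, if_false, sum_const_zero, mul_zero, dvd_zero]

theorem zeroCount_eq_of_odd_linear {i : ι} (hi : Odd (L (Pi.single i 1))) (hip : d i + 1 ≤ p)
    (hV : p ≤ d i + 1 + V i) :
    zeroCount (fun x ↦ c + 2 * L x + 4 * q x) d V p =
      2 ^ (V i - (p - (d i + 1))) * zeroCount (fun x ↦ c + 2 * L x + 4 * q x) d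
        (Function.update V i 0) (d i + 1) := by
  set e : ι → ℤ := Pi.single i 1
  have dilation_single (t : ℤ) : dilation d (Pi.single i t) = (2 ^ d i * t) • e := by
    ext j
    obtain rfl | hj := eq_or_ne j i <;> simp [dilation_apply, e, *]
  have expand (y : ι → ℤ) (t : ℤ) :
      c + 2 * L (dilation d (y + Pi.single i t)) + 4 * q (dilation d (y + Pi.single i t)) =
        c + 2 * L (dilation d y) + 4 * q (dilation d y) + 2 ^ (d i + 1) *
          (t * (L e + 2 * QuadraticMap.polar q (dilation d y) e) +
            2 * t ^ 2 * (2 ^ d i * q e)) := by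
    rw [map_add, dilation_single, map_add, map_smul, QuadraticMap.map_add q, QuadraticMap.map_smul,
      QuadraticMap.polar_smul_right]
    simp only [smul_eq_mul]
    ring
  rw [zeroCount_eq_sum, sum_dyadicBox_eq_sum_update V i, zeroCount_eq_sum, mul_sum]
  refine sum_congr rfl fun y _ ↦ ?_
  simp only [expand, ← card_filter]
  exact card_Ico_dvd_add_two_pow_mul_odd hip hV _ (hi.add_even (even_two_mul _)) _

theorem two_pow_dvd_zeroCount_of_odd_linear (hd : 2 ≤ #{i | d i = 0})
    (h : ∀ e ≤ m, ZeroCountDivisibility e d) (hV : ∀ i, m + 2 ≤ d i + 1 + V i) {i : ι}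
    (hi : Odd (L (Pi.single i 1))) (him : d i ≤ m)
    (i_minimal : ∀ j, d j < d i → 2 ∣ L (Pi.single j 1)) :
    2 ^ ∑ i, V i ∣
      2 ^ defect m d * zeroCount (fun x ↦ c + 2 * L x + 4 * q x) d V (m + 2) := by
  rw [zeroCount_eq_of_odd_linear c q hi (by omega) (hV i)]
  set V' := Function.update V i 0 with hV'
  have sum_eq : ∑ j, V j = V i + ∑ j, V' j := by
    rw [sum_update_of_mem (mem_univ i), zero_add, ← erase_eq, add_sum_erase _ _ (mem_univ i)]
  obtain ⟨D, hD, dvd_mul_zeroCount⟩ : ∃ D, D + (m + 1 - d i) ≤ defect m d ∧ 2 ^ ∑ j, V' j ∣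
      2 ^ D * zeroCount (fun x ↦ c + 2 * L x + 4 * q x) d V' (d i + 1) := by
    rcases hdi : d i with _ | k
    · refine ⟨0, ?_, ?_⟩
      · have := defect_add_sub_le hd m.zero_le
        rw [defect_zero] at this
        omega
      · rw [zeroCount_eq_ite (c := c), pow_zero, one_mul]
        · exact dvd_mul_right _ _
        · exact fun y ↦ dvd_iff_dvd_of_dvd_sub ⟨L (dilation d y) + 2 * q (dilation d y), by ring⟩
    · have := defect_add_sub_le hd (e := k) (m := m) (by omega)
      refine ⟨defect k d, by omega, (h k (by omega)).of_even_linear c q (fun j ↦ ?_) fun j hj ↦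
        i_minimal j (by omega)⟩
      obtain rfl | hji := eq_or_ne j i
      · omega
      · have := hV j
        simp only [hV', Function.update_of_ne hji]
        omega
  rw [sum_eq, pow_add]
  refine (mul_dvd_mul_left _ dvd_mul_zeroCount).trans ?_
  rw [← mul_assoc, ← mul_assoc, ← pow_add, ← pow_add]
  have := hV i
  exact mul_dvd_mul_right (pow_dvd_pow 2 (by omega)) _

variable (L) in
theorem two_pow_dvd_zeroCount_add_two_mul_add_four_mul
    (hd : 2 ≤ #{i | d i = 0}) (h : ∀ e ≤ m, ZeroCountDivisibility e d)
    (hV : ∀ i, m + 2 ≤ d i + 1 + V i) :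
    2 ^ ∑ i, V i ∣
      2 ^ defect m d * zeroCount (fun x ↦ c + 2 * L x + 4 * q x) d V (m + 2) := by
  by_cases even_linear : ∀ i, d i ≤ m → 2 ∣ L (Pi.single i 1)
  · exact (h m le_rfl).of_even_linear c q (fun i ↦ by have := hV i; omega) even_linear
  push Not at even_linear
  -- For minimal `d i`, the linear form is even at the lowered modulus `2 ^ (d i + 1)`.
  obtain ⟨i, hi, i_minimal⟩ := exists_min_image {i | d i ≤ m ∧ ¬ 2 ∣ L (Pi.single i 1)} d
    (by simpa [Finset.Nonempty] using even_linear)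
  simp only [mem_filter_univ, and_imp, ← even_iff_two_dvd, Int.not_even_iff_odd] at hi i_minimal
  refine two_pow_dvd_zeroCount_of_odd_linear c q hd h hV hi.2 hi.1 fun j hj ↦ ?_
  by_contra hLj
  rw [← even_iff_two_dvd, Int.not_even_iff_odd] at hLj
  exact hj.not_ge (i_minimal j (by omega) hLj)

theorem zeroCount_eq_sum_dyadicBox (f : (ι → ℤ) → ℤ) (hV : 1 ≤ d + V) (p : ℕ) :
    zeroCount f d V p = ∑ a ∈ dyadicBox (1 - d),
      zeroCount (fun y ↦ f (dilation d a + (2 : ℤ) • y)) (d - 1) (V - (1 - d)) p := by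
  rw [zeroCount_eq_sum]
  conv_lhs => rw [← add_tsub_cancel_of_le (tsub_le_iff_left.2 hV)]
  simp only [sum_dyadicBox_add, map_add, dilation_dilation_one_sub, zeroCount_eq_sum]

theorem zeroCountDivisibility_one (d : ι → ℕ) : ZeroCountDivisibility 1 d := by
  intro f hf V hV
  have cell_eq (a : ι → ℤ) : zeroCount (fun y ↦ f (dilation d a + (2 : ℤ) • y)) (d - 1)
      (V - (1 - d)) 1 = 2 ^ (∑ i, (V - (1 - d)) i) * if 2 ∣ f (dilation d a) then 1 else 0 := by
    convert zeroCount_eq_ite (c := f (dilation d a)) (fun y ↦ ?_) _ using 4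
    · rw [pow_one]
    · rw [pow_one]
      exact dvd_iff_dvd_of_dvd_sub (hf.dvd_sub_add_smul 2 _ _)
  have parity := two_pow_dvd_mul_card_two_dvd (hf.comp_linearMap (dilation d)) (1 - d)
  rw [zeroCount_eq_sum_dyadicBox f hV]
  simp only [cell_eq]
  rw [← mul_sum, ← card_filter, sum_eq_sum_sub_one_sub_add_card hV, pow_add, mul_left_comm,
    defect_one, ← sum_one_sub]
  exact mul_dvd_mul_left _ parity

theorem zeroCountDivisibility_of_two_le_card (p : ℕ) {d : ι → ℕ} (hd : 2 ≤ #{i | d i = 0}) :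
    ZeroCountDivisibility p d := by
  induction p using Nat.strong_induction_on generalizing d with | _ p ih
  intro f hf V hV
  match p with
  | 0 =>
    rw [zeroCount_eq_ite (c := 0) (by simp)]
    simp
  | 1 => exact zeroCountDivisibility_one d hf hV
  | m + 2 =>
    have hd' : 2 ≤ #{i | (d - 1) i = 0} := hd.trans <| card_le_card fun i ↦ by simp +contextual
    have hV' : 1 ≤ d + V := fun i ↦ le_trans (by simp) (hV i)
    have cell_dvd (a : ι → ℤ) : 2 ^ ∑ i, (V - (1 - d)) i ∣ 2 ^ defect m (d - 1) *
        zeroCount (fun y ↦ f (dilation d a + (2 : ℤ) • y)) (d - 1) (V - (1 - d)) (m + 2) := by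
      obtain ⟨L, q, hLq⟩ := hf.exists_taylor (dilation d a)
      simp only [hLq, map_smul, QuadraticMap.map_smul, smul_eq_mul]
      refine two_pow_dvd_zeroCount_add_two_mul_add_four_mul _ L q hd'
        (fun e he ↦ ih e (by omega) hd') fun i ↦ ?_
      have := hV i
      simp only [Pi.sub_apply, Pi.one_apply]
      omega
    rw [zeroCount_eq_sum_dyadicBox f hV', sum_eq_sum_sub_one_sub_add_card hV', defect_add_two,
      pow_add, pow_add, mul_right_comm, mul_sum]
    exact mul_dvd_mul_right (dvd_sum fun a _ ↦ cell_dvd a) _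

end ZeroCount

theorem two_pow_dvd_sum_card {ι : Type*} [Fintype ι] [DecidableEq ι] {d V : ι → ℕ} {q r : ℕ}
    (hd : 2 ≤ #{i | d i = 0}) (hV : ∀ i, r ≤ d i + V i) (hq : q ≤ r) {f : (ι → ℤ) → ℤ}
    (hf : IsQuadraticFunction f) (w : ℤ) :
    2 ^ (∑ i, V i + q) ∣ 2 ^ defect r d * ∑ i ∈ Ico (0 : ℤ) (2 ^ q),
      #{y ∈ dyadicBox V | 2 ^ r ∣ f (dilation d y) - w * 2 ^ (r - q) * i} := by
  obtain ⟨e, her, hre, card_eq⟩ := exists_card_Ico_dvd_sub_two_pow_mul hq w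
  have sum_eq : ∑ i ∈ Ico (0 : ℤ) (2 ^ q),
      #{y ∈ dyadicBox V | 2 ^ r ∣ f (dilation d y) - w * 2 ^ (r - q) * i} =
      2 ^ (q - (r - e)) * zeroCount f d V e := by
    simp only [card_filter]
    rw [sum_comm]
    simp only [← card_filter, card_eq]
    rw [← mul_sum, zeroCount_eq_sum]
  have zeroCount_dvd := zeroCountDivisibility_of_two_le_card e hd hf fun i ↦ her.trans (hV i)
  have exponent_le := defect_add_sub_le hd her
  calc 2 ^ (∑ i, V i + q)
      ∣ 2 ^ defect e d * zeroCount f d V e * 2 ^ q := by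
        rw [pow_add]
        exact mul_dvd_mul_right zeroCount_dvd _
    _ = 2 ^ (defect e d + (r - e)) * (2 ^ (q - (r - e)) * zeroCount f d V e) := by
        rw [← pow_mul_pow_sub 2 (show r - e ≤ q by omega)]
        ring
    _ ∣ 2 ^ defect r d * (2 ^ (q - (r - e)) * zeroCount f d V e) :=
        mul_dvd_mul_right (pow_dvd_pow 2 exponent_le) _
    _ = _ := by rw [sum_eq]

theorem sum_fin_two_pow {S : Type*} [AddCommMonoid S] (N : ℕ) (φ : ℤ → S) :
    ∑ j : Fin (2 ^ N), φ (j : ℕ) = ∑ t ∈ Ico (0 : ℤ) (2 ^ N), φ t := by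
  refine sum_nbij (fun j : Fin (2 ^ N) ↦ ((j : ℕ) : ℤ)) (fun j _ ↦ ?_) (fun i _ j _ h ↦ ?_)
    (fun t ht ↦ ?_) fun _ _ ↦ rfl
  · exact mem_Ico.2 ⟨by positivity, mod_cast j.isLt⟩
  · exact Fin.ext (Nat.cast_injective h)
  · rw [mem_coe, mem_Ico] at ht
    lift t to ℕ using ht.1
    exact ⟨⟨t, mod_cast ht.2⟩, mem_univ _, rfl⟩

variable {κ : Type*} [Fintype κ] [DecidableEq κ]

theorem sum_card_eq_card_dyadicBox (r v : ℕ) (p : (κ → ZMod (2 ^ r)) → ℤ → Prop)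
    [∀ x t, Decidable (p x t)] :
    ∑ j : Fin (2 ^ v), Nat.card {x // p x (j : ℕ)} =
      #{y ∈ dyadicBox fun o : Option κ ↦ o.elim v fun _ ↦ r |
        p (fun i ↦ (y (some i) : ZMod (2 ^ r))) (y none)} := by
  have card_eq (t : ℤ) : Nat.card {x // p x t} = ∑ x, if p x t then 1 else 0 := by
    rw [Nat.card_eq_fintype_card, Fintype.card_subtype, card_filter]
  rw [card_filter, sum_dyadicBox_option, sum_fin_two_pow v fun t ↦ Nat.card {x // p x t}]
  simp only [card_eq]
  rw [sum_comm]
  refine .trans ?_ (sum_dyadicBox_eq_sum_zmod (fun _ : κ ↦ r) _).symm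
  simp only [Option.elim, Int.cast_natCast, ZMod.natCast_zmod_val]

theorem sum_sum_card_eval_eq (q v : ℕ) {r : ℕ} {f : (Option κ → ℤ) → ℤ}
    {P : MvPolynomial (Option κ) (ZMod (2 ^ r))}
    (eval_eq : ∀ x, (f x : ZMod (2 ^ r)) = P.eval (Int.castRingHom (ZMod (2 ^ r)) ∘ x)) (w : ℤ) :
    ∑ i : Fin (2 ^ q), ∑ j : Fin (2 ^ v), Nat.card {x : κ → ZMod (2 ^ r) //
        P.eval (fun o ↦ o.elim (2 ^ (r - v) * ((j : ℕ) : ZMod (2 ^ r))) x) =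
          w * 2 ^ (r - q) * ((i : ℕ) : ZMod (2 ^ r))} =
      ∑ i ∈ Ico (0 : ℤ) (2 ^ q), #{y ∈ dyadicBox fun o : Option κ ↦ o.elim v fun _ ↦ r |
        2 ^ r ∣ f (dilation (fun o ↦ o.elim (r - v) fun _ ↦ 0) y) - w * 2 ^ (r - q) * i} := by
  have dvd_iff (y : Option κ → ℤ) (i : ℤ) :
      2 ^ r ∣ f (dilation (fun o ↦ o.elim (r - v) fun _ ↦ 0) y) - w * 2 ^ (r - q) * i ↔
        P.eval (fun o ↦ o.elim (2 ^ (r - v) * (y none : ZMod (2 ^ r)))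
          fun i ↦ (y (some i) : ZMod (2 ^ r))) = w * 2 ^ (r - q) * i := by
    have comp_eq : Int.castRingHom (ZMod (2 ^ r)) ∘ dilation (fun o ↦ o.elim (r - v) fun _ ↦ 0) y =
        fun o ↦ o.elim (2 ^ (r - v) * (y none : ZMod (2 ^ r)))
          fun i ↦ (y (some i) : ZMod (2 ^ r)) := by
      ext (_ | _) <;> simp [dilation_apply]
    have cast_pow : (2 : ℤ) ^ r = (2 ^ r : ℕ) := by norm_cast
    rw [cast_pow, ← ZMod.intCast_eq_intCast_iff_dvd_sub, ← comp_eq, ← eval_eq, eq_comm]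
    push_cast
    rfl
  rw [← sum_fin_two_pow]
  refine sum_congr rfl fun i _ ↦ ?_
  simp only [dvd_iff]
  simpa using sum_card_eq_card_dyadicBox r v fun (x : κ → ZMod (2 ^ r)) t ↦
    P.eval (fun o ↦ o.elim (2 ^ (r - v) * (t : ZMod (2 ^ r))) x) =
      w * 2 ^ (r - q) * ((i : ℕ) : ZMod (2 ^ r))

omit [DecidableEq κ] in
theorem two_pow_dvd_two_mul_sum_card {r q v : ℕ} (hκ : 2 ≤ Fintype.card κ) (hq : q ≤ r)
    (hv : v ≤ r) (w : ZMod (2 ^ r)) (P : MvPolynomial (Option κ) (ZMod (2 ^ r)))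
    (hP : P.totalDegree ≤ 2) :
    2 ^ ((r * Fintype.card κ + min (2 * v) r + 1) / 2 + q) ∣
      2 * ∑ i : Fin (2 ^ q), ∑ j : Fin (2 ^ v), Nat.card {x : κ → ZMod (2 ^ r) //
        P.eval (fun o ↦ o.elim (2 ^ (r - v) * ((j : ℕ) : ZMod (2 ^ r))) x) =
          w * 2 ^ (r - q) * ((i : ℕ) : ZMod (2 ^ r))} := by
  classical
  obtain ⟨w, rfl⟩ := ZMod.intCast_surjective w
  obtain ⟨f, hf, eval_eq⟩ := exists_isQuadraticFunction_lift (Int.castRingHom (ZMod (2 ^ r)))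
    ZMod.intCast_surjective P hP
  let V : Option κ → ℕ := fun o ↦ o.elim v fun _ ↦ r
  let d : Option κ → ℕ := fun o ↦ o.elim (r - v) fun _ ↦ 0
  have hd : 2 ≤ #{o | d o = 0} := hκ.trans <| by
    rw [← card_univ, ← card_map Function.Embedding.some]
    exact card_le_card fun o ↦ by simp +contextual [d, eq_comm]
  have hV : ∀ o, r ≤ d o + V o := Option.forall.2 ⟨by simp [d, V, hv], fun _ ↦ by simp [d, V]⟩
  have sum_V : ∑ o, V o = v + r * Fintype.card κ := by
    simp [V, mul_comm]
  set D := (r * Fintype.card κ + (r - 2 * (r - v))) / 2 with hD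
  have defect_eq : defect r d = D + 1 := by
    simp [defect, d, hD, mul_comm, add_comm]
  have dvd_mul := two_pow_dvd_sum_card hd hV hq hf w
  rw [← sum_sum_card_eval_eq q v eval_eq, sum_V, defect_eq, pow_succ, mul_assoc] at dvd_mul
  refine Nat.dvd_of_mul_dvd_mul_left (k := 2 ^ D) (by positivity) (dvd_trans ?_ dvd_mul)
  rw [← pow_add]
  exact pow_dvd_pow 2 (by omega)

theorem stmt_4_general (r : ℕ) (hr : 1 ≤ r) (n : ℕ) (hn : 3 ≤ n)
    (Q : MvPolynomial (Fin n) (ZMod (2 ^ r))) (hQ : Q.totalDegree ≤ 2)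
    (q v : ℕ) (hq : q ≤ r) (hv : v ≤ r)
    (k w g u : ZMod (2 ^ r))
    (T : MvPolynomial (Fin (n - 1)) (ZMod (2 ^ r))) (hT : T.totalDegree ≤ 1) :
    (2 ^ ((r * (n - 1) + min (2 * v) r + 1) / 2 + q - 1) : ℕ) ∣
    ∑ i : Fin (2 ^ q), ∑ j : Fin (2 ^ v),
      Nat.card {x : Fin (n - 1) → ZMod (2 ^ r) //
        MvPolynomial.eval
          (fun t : Fin n => if h : (t : ℕ) < n - 1 then x ⟨t, h⟩
            else MvPolynomial.eval x T
              + u * (2 : ZMod (2 ^ r)) ^ (r - v) * ((j : ℕ) : ZMod (2 ^ r))) Q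
          = k + w * (2 : ZMod (2 ^ r)) ^ (r - q) * ((i : ℕ) : ZMod (2 ^ r))
              + g * (2 : ZMod (2 ^ r)) ^ (r - v) * ((j : ℕ) : ZMod (2 ^ r))} := by
  obtain ⟨P, hP, eval_eq⟩ := exists_totalDegree_le_two_eval_eq hQ hT k g u
  have two_mul_dvd := two_pow_dvd_two_mul_sum_card (by rw [Fintype.card_fin]; omega) hq hv w P hP
  have exponent_pos : 1 ≤ (r * (n - 1) + min (2 * v) r + 1) / 2 := by
    have : 1 ≤ r * (n - 1) := Nat.mul_pos hr (by omega)
    omega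
  rw [Fintype.card_fin, ← Nat.sub_add_cancel (exponent_pos.trans (Nat.le_add_right _ q)),
    pow_succ'] at two_mul_dvd
  simpa only [eval_eq, sub_eq_iff_eq_add', ← mul_assoc, add_right_comm k] using
    Nat.dvd_of_mul_dvd_mul_left two_pos two_mul_dvd

/-- General induction step of the main theorem: if the divisibility statement holds
for all degree-≤2 polynomials in `n-1` variables over `ℤ/2^r`, then it holds for all
degree-≤2 polynomials in `n` variables, for `n ≥ 4`. -/
theorem stmt_4 (r : ℕ) (hr : 1 ≤ r) (n : ℕ) (hn : 4 ≤ n)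
    (IH : ∀ (Q' : MvPolynomial (Fin (n - 1)) (ZMod (2 ^ r))), Q'.totalDegree ≤ 2 →
      ∀ q' v' : ℕ, q' ≤ r → v' ≤ r →
      ∀ k' w' g' u' : ZMod (2 ^ r),
      ∀ T' : MvPolynomial (Fin (n - 2)) (ZMod (2 ^ r)), T'.totalDegree ≤ 1 →
      (2 ^ ((r * (n - 2) + min (2 * v') r + 1) / 2 + q' - 1) : ℕ) ∣
      ∑ i : Fin (2 ^ q'), ∑ j : Fin (2 ^ v'),
        Nat.card {x : Fin (n - 2) → ZMod (2 ^ r) //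
          MvPolynomial.eval
            (fun t : Fin (n - 1) => if h : (t : ℕ) < n - 2 then x ⟨t, h⟩
              else MvPolynomial.eval x T'
                + u' * (2 : ZMod (2 ^ r)) ^ (r - v') * ((j : ℕ) : ZMod (2 ^ r))) Q'
            = k' + w' * (2 : ZMod (2 ^ r)) ^ (r - q') * ((i : ℕ) : ZMod (2 ^ r))
                + g' * (2 : ZMod (2 ^ r)) ^ (r - v') * ((j : ℕ) : ZMod (2 ^ r))})
    (Q : MvPolynomial (Fin n) (ZMod (2 ^ r))) (hQ : Q.totalDegree ≤ 2)
    (q v : ℕ) (hq : q ≤ r) (hv : v ≤ r)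
    (k w g u : ZMod (2 ^ r))
    (T : MvPolynomial (Fin (n - 1)) (ZMod (2 ^ r))) (hT : T.totalDegree ≤ 1) :
    (2 ^ ((r * (n - 1) + min (2 * v) r + 1) / 2 + q - 1) : ℕ) ∣
    ∑ i : Fin (2 ^ q), ∑ j : Fin (2 ^ v),
      Nat.card {x : Fin (n - 1) → ZMod (2 ^ r) //
        MvPolynomial.eval
          (fun t : Fin n => if h : (t : ℕ) < n - 1 then x ⟨t, h⟩
            else MvPolynomial.eval x T
              + u * (2 : ZMod (2 ^ r)) ^ (r - v) * ((j : ℕ) : ZMod (2 ^ r))) Q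
          = k + w * (2 : ZMod (2 ^ r)) ^ (r - q) * ((i : ℕ) : ZMod (2 ^ r))
              + g * (2 : ZMod (2 ^ r)) ^ (r - v) * ((j : ℕ) : ZMod (2 ^ r))} := by
  exact stmt_4_general r hr n (by omega) Q hQ q v hq hv k w g u T hT
end

section
/- Let r ≥ 1 and let Q be a polynomial of total degree at most 2 in n ≥ 3 variables (x_1, …, x_{n-1}, z) over Z_{2^r}. Then for all natural numbers q ≤ r and v ≤ r and all elements k, w, g, l ∈ Z_{2^r}, the sum Σ_{i=0}^{2^q - 1} Σ_{j=0}^{2^v - 1} #(k + w 2^{r-q} i)_{Q, z = l + g 2^{r-v} j} is divisible by 2^{⌈(r(n-1) + min(2v, r))/2⌉ + q - 1}. -/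
/-!
Lift `Q` to the integers and weight the variables: a variable `y` of weight `m` enters the quadratic
part only through `2 ^ m * y`, while the linear part is arbitrary. The outer summation index occurs
linearly, so it is one more variable, of weight `r`; the variables `x` have weight `0`, and the
inner index, hidden in `z`, has weight `r - v`. Hence everything follows from a bound on the number
of zeros modulo `2 ^ r` of a quadratic function with given weights, at least two of them zero.

If the linear coefficient of a variable of positive weight is odd, Hensel's lemma in that variable
gives the exact count. Otherwise split every variable of weight `0` into its lowest binary digit and
the rest: for fixed digits the quadratic part becomes divisible by `4` and the linear part by `2`.
So after dividing by `2` either some linear coefficient is odd and Hensel's lemma applies again, or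
a second division by `2` leads to the same problem modulo `2 ^ (r - 2)` with all positive weights
lowered by one. The recursion ends modulo `2`, where Weyl differencing bounds the character sum.
-/

lemma exists_map_intCast_eq {σ : Type*} {N : ℕ} (P : MvPolynomial σ (ZMod N)) :
    ∃ L : MvPolynomial σ ℤ,
      L.totalDegree ≤ P.totalDegree ∧ L.map (Int.castRingHom (ZMod N)) = P := by
  refine ⟨∑ d ∈ P.support, MvPolynomial.monomial d (P.coeff d).cast, ?_, ?_⟩
  · refine MvPolynomial.totalDegree_finsetSum_le fun d hd => ?_
    exact (MvPolynomial.totalDegree_monomial_le _ _).trans (MvPolynomial.le_totalDegree hd)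
  · simp only [map_sum, MvPolynomial.map_monomial, eq_intCast, ZMod.intCast_cast, ZMod.cast_id', id]
    exact P.support_sum_monomial_coeff

section QuadraticFunction

variable {R M : Type*} [CommRing R] [AddCommGroup M] [Module R M]

/-- The inhomogeneous quadratic function with constant term `c`, linear part `ℓ` and quadratic
part `Q`. -/
def quadFun (c : R) (ℓ : M →ₗ[R] R) (Q : QuadraticForm R M) (x : M) : R :=
  c + ℓ x + Q x

lemma quadFun_add (c : R) (ℓ : M →ₗ[R] R) (Q : QuadraticForm R M) (x y : M) :
    quadFun c ℓ Q (x + y) = quadFun c ℓ Q x + ℓ y + Q.polarBilin x y + Q y := by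
  rw [quadFun, quadFun, LinearMap.map_add, QuadraticMap.map_add Q, Q.polarBilin_apply_apply]
  ring

lemma quadFun_add_smul (c : R) (ℓ : M →ₗ[R] R) (Q : QuadraticForm R M) (t : R) (x y : M) :
    quadFun c ℓ Q (x + t • y) =
      quadFun c ℓ Q x + t * (ℓ y + Q.polarBilin x y + t * Q y) := by
  simp only [quadFun_add, map_smul, QuadraticMap.map_smul, smul_eq_mul]
  ring

/-- A function is quadratic if it is a polynomial function of degree at most two, expressed without
coordinates. -/
def IsQuadratic (F : M → R) : Prop :=
  ∃ (c : R) (ℓ : M →ₗ[R] R) (Q : QuadraticForm R M), F = quadFun c ℓ Q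

namespace IsQuadratic

lemma dvd_add_smul_sub {F : M → R} (hF : IsQuadratic F) (t : R) (x y : M) :
    t ∣ F (x + t • y) - F x := by
  obtain ⟨c, ℓ, Q, rfl⟩ := hF
  rw [quadFun_add_smul, add_sub_cancel_left]
  exact dvd_mul_right _ _

lemma sum {α : Type*} (s : Finset α) {F : α → M → R} (hF : ∀ a ∈ s, IsQuadratic (F a)) :
    IsQuadratic fun x => ∑ a ∈ s, F a x := by
  choose! c ℓ Q h using hF
  refine ⟨∑ a ∈ s, c a, ∑ a ∈ s, ℓ a, ∑ a ∈ s, Q a, funext fun x => ?_⟩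
  simp only [quadFun, LinearMap.sum_apply, _root_.sum_apply, ← Finset.sum_add_distrib]
  exact Finset.sum_congr rfl fun a ha => congrFun (h a ha) x

lemma const_mul {F : M → R} (hF : IsQuadratic F) (a : R) : IsQuadratic fun x => a * F x := by
  obtain ⟨c, ℓ, Q, rfl⟩ := hF
  refine ⟨a * c, a • ℓ, a • Q, funext fun x => ?_⟩
  simp only [quadFun, LinearMap.smul_apply, _root_.smul_apply, smul_eq_mul, mul_add]

lemma affine_mul_affine (f g : M →ᵃ[R] R) : IsQuadratic fun x => f x * g x := by
  refine ⟨f 0 * g 0, f 0 • g.linear + g 0 • f.linear,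
    QuadraticMap.linMulLin f.linear g.linear, funext fun x => ?_⟩
  rw [f.decomp, g.decomp]
  simp only [quadFun, Pi.add_apply, LinearMap.add_apply, LinearMap.smul_apply,
    QuadraticMap.linMulLin_apply, smul_eq_mul, map_zero, zero_add]
  ring

lemma multiset_prod_affine {σ : Type*} (A : σ → M →ᵃ[R] R) {s : Multiset σ} (hs : s.card ≤ 2) :
    IsQuadratic fun x => (s.map fun t => A t x).prod := by
  interval_cases h : s.card
  · obtain rfl := Multiset.card_eq_zero.mp h
    simpa using affine_mul_affine (AffineMap.const R M (1 : R)) (AffineMap.const R M 1)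
  · obtain ⟨t, rfl⟩ := Multiset.card_eq_one.mp h
    simpa using affine_mul_affine (AffineMap.const R M (1 : R)) (A t)
  · obtain ⟨t, u, rfl⟩ := Multiset.card_eq_two.mp h
    simpa using affine_mul_affine (A t) (A u)

lemma eval_affine {σ : Type*} {P : MvPolynomial σ R} (hP : P.totalDegree ≤ 2)
    (A : σ → M →ᵃ[R] R) : IsQuadratic fun x => MvPolynomial.eval (fun t => A t x) P := by
  classical
  simp only [MvPolynomial.eval_eq]
  refine sum _ fun d hd => const_mul ?_ _
  have hcard : (Finsupp.toMultiset d).card ≤ 2 := by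
    rw [Finsupp.card_toMultiset]
    exact (MvPolynomial.le_totalDegree hd).trans hP
  simpa only [Finset.prod_multiset_map_count, Finsupp.count_toMultiset,
    Finsupp.toFinset_toMultiset] using multiset_prod_affine A hcard

end IsQuadratic

end QuadraticFunction

section DyadicScale

variable {ι : Type*}

/-- The diagonal map multiplying the `i`-th coordinate by `2 ^ w i`. -/
def dyadicScale (w : ι → ℕ) : (ι → ℤ) →ₗ[ℤ] (ι → ℤ) :=
  LinearMap.mulLeft ℤ fun i => 2 ^ w i

@[simp]
lemma dyadicScale_apply (w : ι → ℕ) (x : ι → ℤ) (i : ι) :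
    dyadicScale w x i = 2 ^ w i * x i :=
  rfl

lemma dyadicScale_dyadicScale (v w : ι → ℕ) (x : ι → ℤ) :
    dyadicScale v (dyadicScale w x) = dyadicScale (v + w) x := by
  funext i
  simp only [dyadicScale_apply, Pi.add_apply, pow_add, mul_assoc]

lemma dyadicScale_add_one (w : ι → ℕ) (x : ι → ℤ) :
    dyadicScale (w + 1) x = (2 : ℤ) • dyadicScale w x := by
  funext i
  simp only [dyadicScale_apply, Pi.add_apply, Pi.one_apply, Pi.smul_apply, smul_eq_mul]
  ring

-- Since subtraction on `ℕ` is truncated, `1 - w` is the indicator function of the coordinates of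
-- weight zero, and `1 - (1 - w)` that of the coordinates of positive weight.
lemma dyadicScale_dyadicScale_one_sub (w : ι → ℕ) (y : ι → ℤ) :
    dyadicScale w (dyadicScale (1 - w) y) = (2 : ℤ) • dyadicScale (w - 1) y := by
  have hw : w + (1 - w) = w - 1 + 1 := by
    funext i
    simp only [Pi.add_apply, Pi.sub_apply, Pi.one_apply]
    omega
  rw [dyadicScale_dyadicScale, hw, dyadicScale_add_one]

lemma dyadicScale_const (n : ℕ) (x : ι → ℤ) :
    dyadicScale (fun _ => n) x = (2 : ℤ) ^ n • x :=
  rfl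

lemma dyadicScale_single [DecidableEq ι] (w : ι → ℕ) (i : ι) (a : ℤ) :
    dyadicScale w (Pi.single i a) = (2 : ℤ) ^ w i • Pi.single i a := by
  ext j
  by_cases h : j = i
  · subst h; simp
  · simp [h]

variable [Finite ι] [DecidableEq ι]

lemma exists_eq_smul_of_forall_single_dvd {R : Type*} [CommRing R] {d : R}
    {ℓ : (ι → R) →ₗ[R] R} (h : ∀ i, d ∣ ℓ (Pi.single i 1)) : ∃ ℓ', ℓ = d • ℓ' := by
  cases nonempty_fintype ι
  choose a ha using h
  refine ⟨Fintype.linearCombination R a, LinearMap.pi_ext' fun i => LinearMap.ext_ring ?_⟩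
  simp [ha, Fintype.linearCombination_apply, Pi.single_apply]

lemma exists_quadFun_add_dyadicScale_one_sub {w : ι → ℕ} {ℓ : (ι → ℤ) →ₗ[ℤ] ℤ}
    (c : ℤ) (Q : QuadraticForm ℤ (ι → ℤ)) (hℓ : ∀ i, w i ≠ 0 → Even (ℓ (Pi.single i 1)))
    (x : ι → ℤ) :
    ∃ ℓ' : (ι → ℤ) →ₗ[ℤ] ℤ, ∀ y,
      quadFun c ℓ (Q.comp (dyadicScale w)) (x + dyadicScale (1 - w) y) =
        quadFun (quadFun c ℓ (Q.comp (dyadicScale w)) x) ((2 : ℤ) • ℓ')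
          ((2 : ℤ) • (2 : ℤ) • Q.comp (dyadicScale (w - 1))) y := by
  obtain ⟨ℓ₁, hℓ₁⟩ : ∃ ℓ₁, ℓ ∘ₗ dyadicScale (1 - w) = (2 : ℤ) • ℓ₁ := by
    refine exists_eq_smul_of_forall_single_dvd fun i => ?_
    rw [LinearMap.comp_apply, dyadicScale_single, map_smul, smul_eq_mul]
    by_cases hi : w i = 0
    · simp [hi]
    · exact (hℓ i hi).two_dvd.mul_left _
  refine ⟨ℓ₁ + Q.polarBilin (dyadicScale w x) ∘ₗ dyadicScale (w - 1), fun y => ?_⟩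
  have hy : ℓ (dyadicScale (1 - w) y) = 2 * ℓ₁ y := LinearMap.congr_fun hℓ₁ y
  rw [quadFun_add, hy, QuadraticMap.polarBilin_comp, QuadraticMap.comp_apply,
    LinearMap.compl₁₂_apply, dyadicScale_dyadicScale_one_sub, QuadraticMap.map_smul, map_smul]
  simp only [quadFun, LinearMap.smul_apply, LinearMap.add_apply, LinearMap.comp_apply,
    _root_.smul_apply, QuadraticMap.comp_apply, smul_eq_mul]
  ring

end DyadicScale

section DyadicBox

open Finset

variable {ι : Type*}

/-- The box of integer points `x` with `0 ≤ x i < 2 ^ e i`. -/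
abbrev DyadicBox (e : ι → ℕ) : Type _ :=
  ∀ i, Fin (2 ^ e i)

namespace DyadicBox

/-- The point of `ℤ ^ ι` represented by an element of the box. -/
def toInt {e : ι → ℕ} (x : DyadicBox e) : ι → ℤ :=
  fun i => (x i : ℕ)

/-- Writing each coordinate as `x i + 2 ^ e i * y i` splits off its `e i` lowest binary digits. -/
def digitEquiv (e f : ι → ℕ) : DyadicBox f × DyadicBox e ≃ DyadicBox (e + f) :=
  (Equiv.arrowProdEquivProdArrow _ _ _).symm.trans <| Equiv.piCongrRight fun i =>
    finProdFinEquiv.trans <| finCongr <| by rw [Pi.add_apply, pow_add, mul_comm]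

lemma toInt_digitEquiv {e f : ι → ℕ} (y : DyadicBox f) (x : DyadicBox e) :
    (digitEquiv e f (y, x)).toInt = x.toInt + dyadicScale e y.toInt := by
  funext i
  simp [digitEquiv, toInt, Equiv.arrowProdEquivProdArrow]

end DyadicBox

variable [Fintype ι] [DecidableEq ι]

/-- The number of points of the box `DyadicBox e` at which `F` vanishes modulo `2 ^ r`. -/
def solCount (e : ι → ℕ) (r : ℕ) (F : (ι → ℤ) → ℤ) : ℕ :=
  #{x : DyadicBox e | (2 : ℤ) ^ r ∣ F x.toInt}

variable {e f : ι → ℕ} {r s : ℕ} {F G : (ι → ℤ) → ℤ}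

lemma solCount_congr (h : ∀ x, (2 : ℤ) ^ r ∣ F x ↔ (2 : ℤ) ^ s ∣ G x) :
    solCount e r F = solCount e s G := by
  simp only [solCount, h]

lemma solCount_two_mul : solCount e (r + 1) (fun x => 2 * F x) = solCount e r F :=
  solCount_congr fun x => by rw [pow_succ', mul_dvd_mul_iff_left two_ne_zero]

lemma solCount_eq_zero_of_odd (h : ∀ x, Odd (F x)) : solCount e (r + 1) F = 0 := by
  refine card_eq_zero.mpr (filter_eq_empty_iff.mpr fun x _ hx => ?_)
  exact Int.not_even_iff_odd.mpr (h _)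
    (even_iff_two_dvd.mpr ((dvd_pow_self 2 r.succ_ne_zero).trans hx))

lemma solCount_add (e f : ι → ℕ) (r : ℕ) (F : (ι → ℤ) → ℤ) :
    solCount (e + f) r F =
      ∑ x : DyadicBox e, solCount f r fun y => F (x.toInt + dyadicScale e y) := by
  simp only [solCount, card_filter]
  rw [← (DyadicBox.digitEquiv e f).sum_comp, Fintype.sum_prod_type_right]
  simp only [DyadicBox.toInt_digitEquiv]

lemma solCount_add_of_periodic
    (h : ∀ x y, (2 : ℤ) ^ r ∣ F (x + dyadicScale e y) - F x) (f : ι → ℕ) :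
    solCount (e + f) r F = 2 ^ (∑ i, f i) * solCount e r F := by
  have hfibre (x : DyadicBox e) : solCount f r (fun y => F (x.toInt + dyadicScale e y)) =
      2 ^ (∑ i, f i) * if (2 : ℤ) ^ r ∣ F x.toInt then 1 else 0 := by
    simp only [solCount, fun y : ι → ℤ => (dvd_iff_dvd_of_dvd_sub (h x.toInt y))]
    split_ifs with hx <;> simp [hx, prod_pow_eq_pow_sum]
  rw [solCount_add, sum_congr rfl fun x _ => hfibre x, ← mul_sum, ← card_filter, solCount]

lemma solCount_option (e : Option ι → ℕ) (r : ℕ) (F : (Option ι → ℤ) → ℤ) :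
    solCount e r F = ∑ a : Fin (2 ^ e none),
      solCount (fun i => e (some i)) r fun x => F fun o => o.elim (a : ℤ) x := by
  simp only [solCount, card_filter]
  rw [← (Equiv.piOptionEquivProd (β := fun i => Fin (2 ^ e i))).symm.sum_comp,
    Fintype.sum_prod_type]
  refine sum_congr rfl fun a _ => sum_congr rfl fun x _ => ?_
  congr! 3
  funext o
  cases o <;> rfl

lemma card_two_pow_dvd_of_odd_slope {g : ℤ → ℤ}
    (h : ∀ s t, ∃ m, Odd m ∧ g (s + t) = g s + t * m) (r : ℕ) :
    #{t : Fin (2 ^ r) | (2 : ℤ) ^ r ∣ g (t : ℕ)} = 1 := by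
  have hinj : Function.Injective fun t : Fin (2 ^ r) => (g (t : ℕ) : ZMod (2 ^ r)) := by
    intro s t hst
    obtain ⟨m, hm, hg⟩ := h (s : ℕ) ((t : ℕ) - (s : ℕ))
    have hdvd : (2 : ℤ) ^ r ∣ ((t : ℕ) - (s : ℕ) : ℤ) * m := by
      have := (ZMod.intCast_eq_intCast_iff_dvd_sub _ _ _).mp hst
      rw [add_sub_cancel] at hg
      push_cast [hg, add_sub_cancel_left] at this
      exact this
    have hcop : IsCoprime ((2 : ℤ) ^ r) m := (Int.isCoprime_two_left.mpr hm).pow_left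
    have hmod : (s : ℕ) ≡ t [MOD 2 ^ r] :=
      Nat.modEq_iff_dvd.mpr (by exact_mod_cast hcop.dvd_of_dvd_mul_right hdvd)
    exact Fin.ext (hmod.eq_of_lt_of_lt s.isLt t.isLt)
  have hbij := (Fintype.bijective_iff_injective_and_card _).mpr ⟨hinj, by simp⟩
  obtain ⟨t₀, ht₀, huniq⟩ := hbij.existsUnique 0
  have hzero (t : ℤ) : (g t : ZMod (2 ^ r)) = 0 ↔ (2 : ℤ) ^ r ∣ g t := by
    exact_mod_cast ZMod.intCast_zmod_eq_zero_iff_dvd (g t) (2 ^ r)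
  simp only [hzero] at ht₀ huniq
  exact card_eq_one.mpr ⟨t₀, by ext t; simpa using ⟨huniq t, fun h => h ▸ ht₀⟩⟩

lemma solCount_of_odd_slope {i : ι} (hi : e i = r)
    (h : ∀ x t, ∃ m, Odd m ∧ F (x + t • Pi.single i 1) = F x + t * m) :
    solCount e r F = 2 ^ ∑ j ∈ {i}ᶜ, e j := by
  have hsplit (y : ∀ j : {j // j ≠ i}, Fin (2 ^ e j)) : ∃ x₀ : ι → ℤ, ∀ t : Fin (2 ^ e i),
      DyadicBox.toInt ((Equiv.piSplitAt i _).symm (t, y)) = x₀ + (t : ℤ) • Pi.single i 1 := by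
    refine ⟨DyadicBox.toInt ((Equiv.piSplitAt i _).symm (0, y)), fun t => ?_⟩
    funext j
    by_cases hj : j = i
    · subst hj
      simp [DyadicBox.toInt]
    · simp [DyadicBox.toInt, hj]
  have hunique (y : ∀ j : {j // j ≠ i}, Fin (2 ^ e j)) :
      #{t : Fin (2 ^ e i) | (2 : ℤ) ^ r ∣ F (DyadicBox.toInt
        ((Equiv.piSplitAt i fun j => Fin (2 ^ e j)).symm (t, y)))} = 1 := by
    subst hi
    obtain ⟨x₀, hx₀⟩ := hsplit y
    simp only [hx₀]
    refine card_two_pow_dvd_of_odd_slope (g := fun t => F (x₀ + t • Pi.single i 1)) ?_ _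
    intro s t
    simp only [add_smul, ← add_assoc]
    exact h _ t
  simp only [solCount, card_filter] at hunique ⊢
  rw [← (Equiv.piSplitAt i fun j => Fin (2 ^ e j)).symm.sum_comp, Fintype.sum_prod_type_right,
    sum_congr rfl fun y _ => hunique y]
  simp [prod_pow_eq_pow_sum, ← prod_subtype {i}ᶜ (p := (· ≠ i)) (by simp) fun j => 2 ^ e j]

open scoped Fin.CommRing in
lemma natCard_zmod_eq_solCount {p : (ι → ZMod (2 ^ r)) → Prop}
    (h : ∀ x : ι → ℤ, p (fun i => x i) ↔ (F x : ZMod (2 ^ r)) = 0) :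
    Nat.card {x // p x} = solCount (fun _ => r) r F := by
  rw [solCount, ← Fintype.card_subtype, ← Nat.card_eq_fintype_card]
  have hcast (a : Fin (2 ^ r)) : ZMod.finEquiv (2 ^ r) a = ((a : ℕ) : ℤ) := by
    rw [Int.cast_natCast, ← map_natCast (ZMod.finEquiv (2 ^ r)), Fin.cast_val_eq_self]
  refine Nat.card_congr ((Equiv.piCongrRight fun _ =>
    (ZMod.finEquiv (2 ^ r)).toEquiv).subtypeEquiv fun x => ?_).symm
  have hx : Equiv.piCongrRight (fun _ => (ZMod.finEquiv (2 ^ r)).toEquiv) x =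
      fun i => ((DyadicBox.toInt x i : ℤ) : ZMod (2 ^ r)) :=
    funext fun i => hcast (x i)
  rw [hx, h, ZMod.intCast_zmod_eq_zero_iff_dvd]
  push_cast
  rfl

end DyadicBox

section WeylDifferencing

open Finset

lemma card_dvd_sum_mul_sum_neg {G A C : Type*} [AddCommGroup G] [Fintype G] [AddCommGroup A]
    [CommRing C] [IsDomain C] (ψ : AddChar A C) {f : G → A}
    (hf : ∀ u, ∃ (a : A) (β : G →+ A), ∀ x, f (x + u) - f x = a + β x) :
    (Fintype.card G : C) ∣ (∑ x, ψ (f x)) * ∑ x, ψ (-f x) := by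
  classical
  have hdiff : (∑ x, ψ (f x)) * ∑ x, ψ (-f x) = ∑ u, ∑ x, ψ (f (x + u) - f x) := by
    simp only [sum_mul_sum, ← AddChar.map_add_eq_mul, ← sub_eq_add_neg]
    rw [sum_comm, sum_comm (f := fun u x => ψ (f (x + u) - f x))]
    exact sum_congr rfl fun x _ =>
      (Fintype.sum_equiv (Equiv.addLeft x) _ _ fun _ => rfl).symm
  rw [hdiff]
  refine dvd_sum fun u _ => ?_
  obtain ⟨a, β, h⟩ := hf u
  simp only [h, AddChar.map_add_eq_mul, ← mul_sum, ← AddChar.compAddMonoidHom_apply]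
  rw [AddChar.sum_eq_ite]
  split_ifs
  · exact dvd_mul_left _ _
  · exact (dvd_zero _).mul_left _

variable {ι : Type*} {e : ι → ℕ}

lemma DyadicBox.exists_toInt_add (he : ∀ i, e i ≤ 1) (x y : DyadicBox e) :
    ∃ z : ι → ℤ, (x + y).toInt = x.toInt + y.toInt + (2 : ℤ) • z := by
  suffices ∀ i, ∃ z : ℤ, ((x i + y i : Fin (2 ^ e i)) : ℕ) = ((x i : ℕ) + (y i : ℕ) + 2 * z : ℤ) by
    choose z hz using this
    exact ⟨z, funext hz⟩
  intro i
  have hx := (x i).isLt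
  have hy := (y i).isLt
  refine ⟨-(((x i : ℕ) + (y i : ℕ)) / 2), ?_⟩
  rw [Fin.val_add]
  rcases Nat.le_one_iff_eq_zero_or_eq_one.mp (he i) with h | h <;>
    simp only [h] at hx hy ⊢ <;> omega

lemma IsQuadratic.exists_add_sub_eq_mod_two {F : (ι → ℤ) → ℤ} (hF : IsQuadratic F)
    (he : ∀ i, e i ≤ 1) (u : DyadicBox e) :
    ∃ (a : ZMod 2) (β : DyadicBox e →+ ZMod 2), ∀ x : DyadicBox e,
      (F (x + u).toInt : ZMod 2) - F x.toInt = a + β x := by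
  obtain ⟨c, ℓ, Q, rfl⟩ := hF
  have htwo : (2 : ZMod 2) = 0 := rfl
  refine ⟨(ℓ u.toInt + Q u.toInt : ℤ), AddMonoidHom.mk'
    (fun x => (Q.polarBilin x.toInt u.toInt : ZMod 2)) fun x y => ?_, fun x => ?_⟩
  · obtain ⟨z, hz⟩ := DyadicBox.exists_toInt_add he x y
    simp only [hz, map_add, map_smul, LinearMap.add_apply, LinearMap.smul_apply, smul_eq_mul]
    push_cast
    rw [htwo, zero_mul, add_zero]
  · obtain ⟨z, hz⟩ := DyadicBox.exists_toInt_add he x u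
    rw [hz, quadFun_add_smul, quadFun_add, AddMonoidHom.mk'_apply]
    push_cast
    rw [htwo]
    ring

variable [Fintype ι] [DecidableEq ι] {F : (ι → ℤ) → ℤ}

/-- The nontrivial character of `ZMod 2`, with values `1` and `-1`. -/
def signChar : AddChar (ZMod 2) ℤ :=
  AddChar.zmodChar 2 neg_one_sq

lemma signChar_intCast (a : ℤ) : signChar a = if (2 : ℤ) ∣ a then 1 else -1 := by
  split_ifs with h
  · rw [(ZMod.intCast_zmod_eq_zero_iff_dvd a 2).mpr h, AddChar.map_zero_eq_one]
  · rw [ZMod.intCast_eq_one_iff_odd.mpr (Int.not_even_iff_odd.mp fun h' => h h'.two_dvd)]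
    rfl

lemma two_mul_solCount_one (e : ι → ℕ) (F : (ι → ℤ) → ℤ) :
    2 * (solCount e 1 F : ℤ) = 2 ^ (∑ i, e i) + ∑ x : DyadicBox e, signChar (F x.toInt) := by
  have hcard : (2 : ℤ) ^ (∑ i, e i) = ∑ _x : DyadicBox e, 1 := by
    simp [prod_pow_eq_pow_sum]
  rw [hcard, ← sum_add_distrib, solCount, card_filter, Nat.cast_sum, mul_sum]
  refine sum_congr rfl fun x _ => ?_
  rw [signChar_intCast, pow_one]
  split_ifs <;> rfl

lemma pow_succ_dvd_of_pow_dvd_sq {p a : ℤ} (hp : Prime p) {n : ℕ} (h : p ^ (2 * n + 1) ∣ a ^ 2) :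
    p ^ (n + 1) ∣ a := by
  obtain ⟨b, rfl⟩ : p ^ n ∣ a := by
    rw [← Int.pow_dvd_pow_iff two_ne_zero, ← pow_mul, mul_comm n 2]
    exact (pow_dvd_pow p (Nat.le_succ _)).trans h
  rw [mul_pow, ← pow_mul, mul_comm n 2, pow_succ,
    mul_dvd_mul_iff_left (pow_ne_zero _ hp.ne_zero)] at h
  rw [pow_succ]
  exact mul_dvd_mul_left _ (hp.dvd_of_dvd_pow h)

lemma IsQuadratic.two_pow_dvd_solCount_one (hF : IsQuadratic F) (he : ∀ i, e i ≤ 1) {E : ℕ}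
    (hE : 2 * E + 1 ≤ ∑ i, e i) : 2 ^ E ∣ solCount e 1 F := by
  set S := ∑ x : DyadicBox e, signChar (F x.toInt) with hS
  have hsq : (2 : ℤ) ^ (∑ i, e i) ∣ S ^ 2 := by
    simpa [prod_pow_eq_pow_sum, ZMod.neg_eq_self_mod_two, sq, hS] using
      card_dvd_sum_mul_sum_neg signChar (f := fun x : DyadicBox e => (F x.toInt : ZMod 2))
        (hF.exists_add_sub_eq_mod_two he)
  have hSE : (2 : ℤ) ^ (E + 1) ∣ S :=
    pow_succ_dvd_of_pow_dvd_sq Int.prime_two ((pow_dvd_pow 2 hE).trans hsq)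
  have hcount : (2 : ℤ) ^ (E + 1) ∣ 2 * solCount e 1 F := by
    rw [two_mul_solCount_one]
    exact (pow_dvd_pow 2 (by omega)).add hSE
  rw [pow_succ', mul_dvd_mul_iff_left two_ne_zero] at hcount
  exact_mod_cast hcount

end WeylDifferencing

section WeightedCount

open Finset

variable {ι : Type*} [Fintype ι] {w : ι → ℕ}

lemma sum_one_sub_one_sub_add_two_le (hw : 2 ≤ #{i | w i = 0}) :
    (∑ i, (1 - (1 - w)) i) + 2 ≤ Fintype.card ι := by
  have hcard : ∑ i, ((1 - (1 - w)) i + if w i = 0 then 1 else 0) = Fintype.card ι := by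
    rw [← card_univ, card_eq_sum_ones]
    refine sum_congr rfl fun i _ => ?_
    simp only [Pi.sub_apply, Pi.one_apply]
    split_ifs <;> omega
  rw [sum_add_distrib, ← card_filter] at hcard
  omega

lemma sum_add_min_le (w : ι → ℕ) (r : ℕ) :
    ∑ i, (r + min r (2 * w i)) ≤ r * (Fintype.card ι + ∑ i, (1 - (1 - w)) i) := by
  have hle (i : ι) : min r (2 * w i) ≤ r * (1 - (1 - w)) i := by
    rcases Nat.eq_zero_or_pos (w i) with h | h
    · simp [h]
    · have hone : (1 - (1 - w)) i = 1 := by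
        simp only [Pi.sub_apply, Pi.one_apply]
        omega
      rw [hone, mul_one]
      exact min_le_left _ _
  calc ∑ i, (r + min r (2 * w i)) ≤ ∑ i, (r + r * (1 - (1 - w)) i) :=
        sum_le_sum fun i _ => Nat.add_le_add_left (hle i) r
    _ = r * (Fintype.card ι + ∑ i, (1 - (1 - w)) i) := by
        simp only [sum_add_distrib, ← mul_sum, sum_const, card_univ, smul_eq_mul]
        ring

lemma sum_add_two_add_min (w : ι → ℕ) (r : ℕ) :
    ∑ i, (r + 2 + min (r + 2) (2 * w i)) =
      ∑ i, (r + min r (2 * (w - 1) i)) + 2 * (Fintype.card ι + ∑ i, (1 - (1 - w)) i) := by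
  rw [mul_add, ← card_univ, card_eq_sum_ones, mul_sum, mul_sum, ← sum_add_distrib,
    ← sum_add_distrib]
  refine sum_congr rfl fun i _ => ?_
  simp only [Pi.sub_apply, Pi.one_apply]
  omega

variable [DecidableEq ι]
  {e : ι → ℕ} {r : ℕ} {c : ℤ} {ℓ : (ι → ℤ) →ₗ[ℤ] ℤ} {Q : QuadraticForm ℤ (ι → ℤ)}

lemma solCount_quadFun_of_odd {i : ι} (hi : e i = r) (hℓ : Odd (ℓ (Pi.single i 1)))
    (hpolar : ∀ x, Even (Q.polarBilin x (Pi.single i 1))) (hQ : Even (Q (Pi.single i 1))) :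
    solCount e r (quadFun c ℓ Q) = 2 ^ ∑ j ∈ {i}ᶜ, e j :=
  solCount_of_odd_slope hi fun x t =>
    ⟨_, (hℓ.add_even (hpolar x)).add_even (hQ.mul_left t), quadFun_add_smul c ℓ Q t x _⟩

lemma solCount_quadFun_add (c : ℤ) (ℓ : (ι → ℤ) →ₗ[ℤ] ℤ) (Q : QuadraticForm ℤ (ι → ℤ)) (r : ℕ)
    (f : ι → ℕ) : solCount ((fun _ => r) + f) r (quadFun c ℓ Q) =
      2 ^ (∑ i, f i) * solCount (fun _ => r) r (quadFun c ℓ Q) := by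
  refine solCount_add_of_periodic (fun x y => ?_) f
  rw [dyadicScale_const]
  exact IsQuadratic.dvd_add_smul_sub ⟨c, ℓ, Q, rfl⟩ _ x y

lemma two_pow_dvd_solCount_of_halving {E : ℕ}
    (h : ∀ c, 2 ^ E ∣ solCount e r (quadFun c ℓ Q)) (c : ℤ) :
    2 ^ E ∣ solCount e (r + 1) (quadFun c ((2 : ℤ) • ℓ) ((2 : ℤ) • Q)) := by
  have heven (x : ι → ℤ) : Even (((2 : ℤ) • ℓ) x + ((2 : ℤ) • Q) x) :=
    ⟨ℓ x + Q x, by simp only [LinearMap.smul_apply, _root_.smul_apply, smul_eq_mul]; ring⟩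
  rcases Int.even_or_odd c with hc | hc
  · obtain ⟨b, rfl⟩ := hc.two_dvd
    have hquad (x : ι → ℤ) :
        quadFun (2 * b) ((2 : ℤ) • ℓ) ((2 : ℤ) • Q) x = 2 * quadFun b ℓ Q x := by
      simp only [quadFun, LinearMap.smul_apply, _root_.smul_apply, smul_eq_mul, mul_add]
    rw [funext hquad, solCount_two_mul]
    exact h b
  · rw [solCount_eq_zero_of_odd fun x => ?_]
    · exact dvd_zero _
    · rw [quadFun, add_assoc]
      exact hc.add_even (heven x)

lemma two_pow_dvd_solCount_two_smul {E E' : ℕ}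
    (hE : E ≤ (r + 1) * (Fintype.card ι - 1)) (hE' : E ≤ Fintype.card ι + E')
    (h : ∀ c ℓ, 2 ^ E' ∣ solCount (fun _ => r) r (quadFun c ℓ Q)) :
    2 ^ E ∣ solCount (fun _ => r + 1) (r + 1) (quadFun c ℓ ((2 : ℤ) • Q)) := by
  by_cases hodd : ∃ i, Odd (ℓ (Pi.single i 1))
  · obtain ⟨i, hi⟩ := hodd
    rw [solCount_quadFun_of_odd rfl hi (fun x => ?_) ?_, sum_const, card_compl, card_singleton,
      smul_eq_mul, mul_comm]
    · exact pow_dvd_pow 2 hE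
    · exact even_two.mul_right _
    · rw [QuadraticMap.polarBilin_apply_apply, FunLike.coe_smul,
        QuadraticMap.polar_smul]
      exact even_two.mul_right _
  · push Not at hodd
    obtain ⟨ℓ', rfl⟩ := exists_eq_smul_of_forall_single_dvd fun i =>
      (Int.not_odd_iff_even.mp (hodd i)).two_dvd
    refine two_pow_dvd_solCount_of_halving (fun c => ?_) c
    have hbox : (fun _ : ι => r + 1) = (fun _ => r) + 1 := rfl
    rw [hbox, solCount_quadFun_add]
    refine (pow_dvd_pow 2 hE').trans ?_
    rw [pow_add]
    exact mul_dvd_mul (by simp) (h c ℓ')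

lemma solCount_comp_dyadicScale_of_odd {i : ι} (hi : w i ≠ 0) (hodd : Odd (ℓ (Pi.single i 1))) :
    solCount (fun _ => r) r (quadFun c ℓ (Q.comp (dyadicScale w))) =
      2 ^ (r * (Fintype.card ι - 1)) := by
  have heven : Even ((2 : ℤ) ^ w i) := even_two.pow_of_ne_zero hi
  rw [solCount_quadFun_of_odd rfl hodd (fun x => ?_) ?_, sum_const, card_compl, card_singleton,
    smul_eq_mul, mul_comm]
  · rw [QuadraticMap.comp_apply, dyadicScale_single, QuadraticMap.map_smul]
    exact (heven.mul_right _).mul_right _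
  · rw [QuadraticMap.polarBilin_comp, LinearMap.compl₁₂_apply, dyadicScale_single, map_smul]
    exact heven.mul_right _

lemma two_pow_dvd_solCount_mod_two (hw : 2 ≤ #{i | w i = 0})
    (hℓ : ∀ i, w i ≠ 0 → Even (ℓ (Pi.single i 1))) :
    2 ^ ((∑ i, (1 + min 1 (2 * w i)) - 1) / 2) ∣
      solCount (fun _ => 1) 1 (quadFun c ℓ (Q.comp (dyadicScale w))) := by
  have hbox : (fun _ => 1) = (1 - w) + (1 - (1 - w)) := by
    funext i
    simp only [Pi.add_apply, Pi.sub_apply, Pi.one_apply]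
    omega
  have hdim : ∑ i, (1 - w) i + ∑ i, (1 - (1 - w)) i = Fintype.card ι := by
    rw [← sum_add_distrib, ← card_univ, card_eq_sum_ones]
    exact sum_congr rfl fun i _ => (congrFun hbox i).symm
  rw [hbox, solCount_add_of_periodic fun x y => ?_]
  · have hweyl := IsQuadratic.two_pow_dvd_solCount_one
      ⟨c, ℓ, Q.comp (dyadicScale w), rfl⟩ (e := 1 - w) (fun i => Nat.sub_le _ _)
      (E := (∑ i, (1 - w) i - 1) / 2) (by have := sum_one_sub_one_sub_add_two_le hw; omega)
    refine (pow_dvd_pow 2 ?_).trans (pow_add 2 _ _ ▸ mul_dvd_mul_left _ hweyl)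
    have := sum_add_min_le w 1
    omega
  · obtain ⟨ℓ', hℓ'⟩ := exists_quadFun_add_dyadicScale_one_sub c Q hℓ x
    rw [hℓ']
    simp only [quadFun, LinearMap.smul_apply, _root_.smul_apply, smul_eq_mul, pow_one]
    exact ⟨ℓ' y + 2 * Q.comp (dyadicScale (w - 1)) y, by ring⟩

lemma two_pow_dvd_solCount_add_two (hw : 2 ≤ #{i | w i = 0})
    (hℓ : ∀ i, w i ≠ 0 → Even (ℓ (Pi.single i 1)))
    (ih : ∀ c ℓ, 2 ^ ((∑ i, (r + min r (2 * (w - 1) i)) - 1) / 2) ∣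
      solCount (fun _ => r) r (quadFun c ℓ (Q.comp (dyadicScale (w - 1))))) :
    2 ^ ((∑ i, (r + 2 + min (r + 2) (2 * w i)) - 1) / 2) ∣
      solCount (fun _ => r + 2) (r + 2) (quadFun c ℓ (Q.comp (dyadicScale w))) := by
  have hbox : (fun _ => r + 2) = (1 - w) + ((fun _ => r + 1) + (1 - (1 - w))) := by
    funext i
    simp only [Pi.add_apply, Pi.sub_apply, Pi.one_apply]
    omega
  rw [hbox, solCount_add]
  refine dvd_sum fun x _ => ?_
  obtain ⟨ℓ', hℓ'⟩ := exists_quadFun_add_dyadicScale_one_sub c Q hℓ x.toInt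
  simp only [hℓ']
  refine two_pow_dvd_solCount_of_halving (fun b => ?_) _
  rw [solCount_quadFun_add]
  set m := ∑ i, (1 - (1 - w)) i
  set B := ∑ i, (r + 2 + min (r + 2) (2 * w i))
  obtain ⟨k, hk⟩ : ∃ k, Fintype.card ι = m + 2 + k :=
    Nat.exists_eq_add_of_le (sum_one_sub_one_sub_add_two_le hw)
  have hB : B ≤ (r + 2) * (Fintype.card ι + m) := sum_add_min_le w (r + 2)
  have hB' := sum_add_two_add_min w r
  have hE : (B - 1) / 2 - m ≤ (r + 1) * (Fintype.card ι - 1) := by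
    rw [hk] at hB
    have : B ≤ 2 * (m + (r + 1) * (m + 1 + k)) + 2 := hB.trans (by nlinarith [Nat.zero_le (r * k)])
    rw [show Fintype.card ι - 1 = m + 1 + k by omega]
    omega
  refine (pow_dvd_pow 2 (by omega : (B - 1) / 2 ≤ m + ((B - 1) / 2 - m))).trans ?_
  rw [pow_add]
  exact mul_dvd_mul_left _ (two_pow_dvd_solCount_two_smul hE (by omega) ih)

lemma two_pow_dvd_solCount_of_odd (hw : 2 ≤ #{i | w i = 0}) {i : ι} (hi : w i ≠ 0)
    (hodd : Odd (ℓ (Pi.single i 1))) :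
    2 ^ ((∑ i, (r + min r (2 * w i)) - 1) / 2) ∣
      solCount (fun _ => r) r (quadFun c ℓ (Q.comp (dyadicScale w))) := by
  rw [solCount_comp_dyadicScale_of_odd hi hodd]
  refine pow_dvd_pow 2 ?_
  have hsum : ∑ i, (r + min r (2 * w i)) ≤ r * (2 * (Fintype.card ι - 1)) :=
    (sum_add_min_le w r).trans <| Nat.mul_le_mul_left r <| by
      have := sum_one_sub_one_sub_add_two_le hw
      omega
  rw [mul_left_comm] at hsum
  omega

theorem two_pow_dvd_solCount (hw : 2 ≤ #{i | w i = 0}) (r : ℕ) (c : ℤ) (ℓ : (ι → ℤ) →ₗ[ℤ] ℤ) :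
    2 ^ ((∑ i, (r + min r (2 * w i)) - 1) / 2) ∣
      solCount (fun _ => r) r (quadFun c ℓ (Q.comp (dyadicScale w))) := by
  induction r using Nat.twoStepInduction generalizing w c ℓ with
  | zero => simp
  | one =>
    by_cases hℓ : ∀ i, w i ≠ 0 → Even (ℓ (Pi.single i 1))
    · exact two_pow_dvd_solCount_mod_two hw hℓ
    · push Not at hℓ
      obtain ⟨i, hi, hodd⟩ := hℓ
      exact two_pow_dvd_solCount_of_odd hw hi (Int.not_even_iff_odd.mp hodd)
  | more r ih _ =>
    by_cases hℓ : ∀ i, w i ≠ 0 → Even (ℓ (Pi.single i 1))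
    · refine two_pow_dvd_solCount_add_two hw hℓ (ih (hw.trans (card_le_card ?_)))
      exact monotone_filter_right _ fun i _ hi => by simp [hi]
    · push Not at hℓ
      obtain ⟨i, hi, hodd⟩ := hℓ
      exact two_pow_dvd_solCount_of_odd hw hi (Int.not_even_iff_odd.mp hodd)

end WeightedCount

section PartialBox

open Finset

lemma pow_sub_dvd_of_pow_dvd_pow_mul {p a b m : ℕ} (hp : 0 < p) (h : p ^ a ∣ p ^ b * m) :
    p ^ (a - b) ∣ m := by
  rcases le_total b a with hab | hab
  · rw [← Nat.add_sub_cancel' hab, pow_add] at h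
    exact Nat.dvd_of_mul_dvd_mul_left (pow_pos hp b) h
  · simp [Nat.sub_eq_zero_of_le hab]

variable {ι : Type*} {r q : ℕ} {P : (ι → ℤ) → ℤ}

lemma IsQuadratic.two_pow_dvd_slice_add_sub (hP : IsQuadratic P) {v : ι → ℕ}
    (hv : ∀ i, v i ≤ r) (hq : q ≤ r) (K W : ℤ) (X Y : Option ι → ℤ) :
    let F : (Option ι → ℤ) → ℤ := fun X =>
      P (dyadicScale (fun i => r - v i) fun i => X (some i)) - (K + W * 2 ^ (r - q) * X none)
    (2 : ℤ) ^ r ∣ F (X + dyadicScale (fun o => o.elim q v) Y) - F X := by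
  intro F
  have hscale : (dyadicScale (fun i => r - v i) fun i =>
      (X + dyadicScale (fun o => o.elim q v) Y) (some i)) =
        dyadicScale (fun i => r - v i) (fun i => X (some i)) +
          (2 : ℤ) ^ r • fun i => Y (some i) := by
    funext i
    simp [mul_add, ← mul_assoc, ← pow_add, Nat.sub_add_cancel (hv i)]
  have hq' : (2 : ℤ) ^ (r - q) * 2 ^ q = 2 ^ r := by rw [← pow_add, Nat.sub_add_cancel hq]
  have hP' := hP.dvd_add_smul_sub ((2 : ℤ) ^ r)
    (dyadicScale (fun i => r - v i) fun i => X (some i)) fun i => Y (some i)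
  have hF : F (X + dyadicScale (fun o => o.elim q v) Y) - F X =
      P (dyadicScale (fun i => r - v i) (fun i => X (some i)) + (2 : ℤ) ^ r • fun i => Y (some i)) -
        P (dyadicScale (fun i => r - v i) fun i => X (some i)) - 2 ^ r * (W * Y none) := by
    simp only [F]
    rw [hscale, Pi.add_apply, dyadicScale_apply, Option.elim_none]
    linear_combination -(W * Y none) * hq'
  rw [hF]
  exact dvd_sub hP' (dvd_mul_right _ _)

variable [Fintype ι] [DecidableEq ι]

lemma IsQuadratic.two_pow_dvd_solCount_sub_affine (hP : IsQuadratic P) {w : ι → ℕ}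
    (hw : 2 ≤ #{i | w i = 0}) (r : ℕ) (K W : ℤ) :
    2 ^ ((∑ i, (r + min r (2 * w i)) + 2 * r - 1) / 2) ∣
      solCount (fun _ : Option ι => r) r fun X =>
        P (dyadicScale w fun i => X (some i)) - (K + W * X none) := by
  obtain ⟨c, ℓ, Q, rfl⟩ := hP
  let w' : Option ι → ℕ := fun o => o.elim r w
  let restrict : (Option ι → ℤ) →ₗ[ℤ] (ι → ℤ) := LinearMap.funLeft ℤ ℤ some
  have hw' : 2 ≤ #{o | w' o = 0} := by
    refine hw.trans (card_le_card_of_injOn some (fun i hi => ?_) (Option.some_injective _).injOn)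
    simpa [w'] using hi
  have hsum : ∑ o, (r + min r (2 * w' o)) = ∑ i, (r + min r (2 * w i)) + 2 * r := by
    rw [Fintype.sum_option]
    simp only [w', Option.elim]
    omega
  have hcomm (X : Option ι → ℤ) : restrict (dyadicScale w' X) = dyadicScale w (restrict X) := rfl
  have hfun (X : Option ι → ℤ) :
      quadFun c ℓ Q (dyadicScale w fun i => X (some i)) - (K + W * X none) =
        quadFun (c - K) (ℓ ∘ₗ dyadicScale w ∘ₗ restrict - W • LinearMap.proj none)
          ((Q.comp restrict).comp (dyadicScale w')) X := by
    have hX : (fun i => X (some i)) = restrict X := rfl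
    simp only [quadFun, hX, QuadraticMap.comp_apply, hcomm, LinearMap.sub_apply,
      LinearMap.comp_apply, LinearMap.smul_apply, LinearMap.proj_apply, smul_eq_mul]
    ring
  rw [← hsum, funext hfun]
  exact two_pow_dvd_solCount hw' r _ _

theorem IsQuadratic.two_pow_dvd_sum_solCount (hP : IsQuadratic P) {v : ι → ℕ}
    (hv : ∀ i, v i ≤ r) (hfull : 2 ≤ #{i | v i = r}) (hq : q ≤ r) (K W : ℤ) :
    2 ^ ((∑ i, min r (2 * v i) + 1) / 2 + q - 1) ∣
      ∑ u : Fin (2 ^ q), solCount v r fun x =>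
        P (dyadicScale (fun i => r - v i) x) - (K + W * 2 ^ (r - q) * (u : ℕ)) := by
  let e : Option ι → ℕ := fun o => o.elim q v
  have he : (fun _ => r) = e + fun o => r - e o := by
    funext o
    cases o <;> simp [e, hq, hv]
  have hw : 2 ≤ #{i | r - v i = 0} :=
    hfull.trans (card_le_card (monotone_filter_right _ fun i _ hi => by simp [hi]))
  have hcount := hP.two_pow_dvd_solCount_sub_affine hw r K (W * 2 ^ (r - q))
  rw [he, solCount_add_of_periodic, solCount_option] at hcount
  · refine (pow_dvd_pow 2 ?_).trans (pow_sub_dvd_of_pow_dvd_pow_mul two_pos hcount)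
    have hsum : ∑ i, (r + min r (2 * (r - v i))) =
        ∑ i, min r (2 * v i) + 2 * ∑ i, (r - v i) := by
      rw [mul_sum, ← sum_add_distrib]
      exact sum_congr rfl fun i _ => by have := hv i; omega
    rw [hsum, Fintype.sum_option]
    simp only [e, Option.elim]
    omega
  · exact hP.two_pow_dvd_slice_add_sub hv hq K W

end PartialBox

lemma exists_isQuadratic_eval_intCast {σ M : Type*} [AddCommGroup M] {N : ℕ}
    {P : MvPolynomial σ (ZMod N)} (hP : P.totalDegree ≤ 2) (A : σ → M →ᵃ[ℤ] ℤ) :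
    ∃ F : M → ℤ, IsQuadratic F ∧ ∀ x, P.eval (fun t => (A t x : ZMod N)) = F x := by
  obtain ⟨L, hL, rfl⟩ := exists_map_intCast_eq P
  refine ⟨_, IsQuadratic.eval_affine (hL.trans hP) A, fun x => ?_⟩
  exact (MvPolynomial.map_eval (Int.castRingHom (ZMod N)) (fun t => A t x) L).symm

lemma exists_isQuadratic_eval_slice {n N : ℕ} {Q : MvPolynomial (Fin n) (ZMod N)}
    (hQ : Q.totalDegree ≤ 2) (l g : ZMod N) :
    ∃ P : (Option (Fin (n - 1)) → ℤ) → ℤ, IsQuadratic P ∧ ∀ X, Q.eval (fun t : Fin n =>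
      if h : (t : ℕ) < n - 1 then (X (some ⟨t, h⟩) : ZMod N) else l + g * X none) = P X := by
  let coord (o : Option (Fin (n - 1))) : (Option (Fin (n - 1)) → ℤ) →ᵃ[ℤ] ℤ :=
    (LinearMap.proj o : (Option (Fin (n - 1)) → ℤ) →ₗ[ℤ] ℤ).toAffineMap
  obtain ⟨l, rfl⟩ := ZMod.intCast_surjective l
  obtain ⟨g, rfl⟩ := ZMod.intCast_surjective g
  obtain ⟨P, hP, heval⟩ := exists_isQuadratic_eval_intCast hQ fun t : Fin n =>
    if h : (t : ℕ) < n - 1 then coord (some ⟨t, h⟩) else AffineMap.const ℤ _ l + g • coord none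
  refine ⟨P, hP, fun X => ?_⟩
  rw [← heval X]
  congr 2
  funext t
  split_ifs <;> simp [coord]

lemma exists_isQuadratic_sum_natCard_slice {n r : ℕ} {Q : MvPolynomial (Fin n) (ZMod (2 ^ r))}
    (hQ : Q.totalDegree ≤ 2) (l g : ZMod (2 ^ r)) (v : ℕ) :
    ∃ P : (Option (Fin (n - 1)) → ℤ) → ℤ, IsQuadratic P ∧ ∀ k : ℤ,
      ∑ j : Fin (2 ^ v), Nat.card {x : Fin (n - 1) → ZMod (2 ^ r) // Q.eval (fun t : Fin n =>
        if h : (t : ℕ) < n - 1 then x ⟨t, h⟩ else l + g * 2 ^ (r - v) * ((j : ℕ) : ZMod (2 ^ r)))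
          = k} =
        solCount (fun o => o.elim v fun _ => r) r fun X =>
          P (dyadicScale (fun o => r - o.elim v fun _ => r) X) - k := by
  obtain ⟨P, hP, heval⟩ := exists_isQuadratic_eval_slice hQ l g
  refine ⟨P, hP, fun k => ?_⟩
  rw [solCount_option]
  refine Finset.sum_congr rfl fun j _ => natCard_zmod_eq_solCount fun x => ?_
  rw [Int.cast_sub, sub_eq_zero, ← heval]
  simp [mul_assoc]

/-- Corollary (b): the double sum `∑_{i<2^q} ∑_{j<2^v} #(k+w2^{r-q}i)_{Q, z=l+g2^{r-v}j}`
is divisible by `2^{⌈(r(n-1)+min(2v,r))/2⌉+q-1}`. -/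
theorem stmt_6 (r : ℕ) (hr : 1 ≤ r) (n : ℕ) (hn : 3 ≤ n)
    (Q : MvPolynomial (Fin n) (ZMod (2 ^ r))) (hQ : Q.totalDegree ≤ 2)
    (q v : ℕ) (hq : q ≤ r) (hv : v ≤ r) (k w g l : ZMod (2 ^ r)) :
    (2 ^ ((r * (n - 1) + min (2 * v) r + 1) / 2 + q - 1) : ℕ) ∣
    ∑ i : Fin (2 ^ q), ∑ j : Fin (2 ^ v),
      Nat.card {x : Fin (n - 1) → ZMod (2 ^ r) //
        MvPolynomial.eval
          (fun t : Fin n => if h : (t : ℕ) < n - 1 then x ⟨t, h⟩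
            else l + g * (2 : ZMod (2 ^ r)) ^ (r - v) * ((j : ℕ) : ZMod (2 ^ r))) Q
          = k + w * (2 : ZMod (2 ^ r)) ^ (r - q) * ((i : ℕ) : ZMod (2 ^ r))} := by
  obtain ⟨K, rfl⟩ := ZMod.intCast_surjective k
  obtain ⟨W, rfl⟩ := ZMod.intCast_surjective w
  obtain ⟨P, hP, hslice⟩ := exists_isQuadratic_sum_natCard_slice hQ l g v
  let e : Option (Fin (n - 1)) → ℕ := fun o => o.elim v fun _ => r
  have he (o) : e o ≤ r := by cases o <;> simp [e, hv]
  have hfull : 2 ≤ Finset.card {o | e o = r} :=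
    calc 2 ≤ Fintype.card (Fin (n - 1)) := by rw [Fintype.card_fin]; omega
      _ ≤ _ := Finset.card_le_card_of_injOn some (by simp [Set.MapsTo, e])
        (Option.some_injective _).injOn
  have hsum : ∑ o, min r (2 * e o) = r * (n - 1) + min (2 * v) r := by
    simp [Fintype.sum_option, e, min_eq_left (Nat.le_mul_of_pos_left r two_pos), mul_comm r,
      add_comm, min_comm]
  have hdvd := hP.two_pow_dvd_sum_solCount he hfull hq K W
  rw [hsum] at hdvd
  convert hdvd using 2 with i
  rw [← hslice]
  push_cast
  rfl
end

section
/- Let r ≥ 1 and let m ∈ Z_{2^r} be of the form m = 2^t u where u is a unit of Z_{2^r} and t < r is a natural number. Then the number of pairs (x, y) ∈ Z_{2^r} × Z_{2^r} with x y = m equals (t + 1) · 2^{r-1}. -/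
/-!
Let `R` be a local ring whose maximal ideal is generated by `π`, and let `m = π ^ t * u ≠ 0` with
`u` a unit. If `x * y = m` then `x` is associated to `π ^ k` for exactly one `k ≤ t`, so it
suffices to see that each `k` contributes `|Rˣ|` solutions. The elements `x` associated to
`a = π ^ k` form the orbit of `a` under `Rˣ`, and for each of them the solutions `y` form a coset
of the annihilator of `a`. The stabilizer of `a` in `Rˣ` is `1 + Ann a`, so the orbit-stabilizer
theorem gives `|Rˣ|` pairs. For `R = ℤ / 2 ^ r` the unit group has order `2 ^ (r - 1)`.
-/

open Cardinal IsLocalRing MulAction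

section LocalRing

variable {R : Type*} [CommRing R] [IsLocalRing R]

lemma isUnit_one_add_of_mul_eq_zero {a c : R} (ha : a ≠ 0) (hac : a * c = 0) :
    IsUnit (1 + c) := by
  have hc : -c ∈ nonunits R := fun h ↦ ha <| ((IsUnit.neg_iff c).mp h).mul_left_eq_zero.mp hac
  simpa using isUnit_one_sub_self_of_mem_nonunits (-c) hc

lemma not_mul_dvd_self {a b : R} (ha : a ≠ 0) (hb : ¬IsUnit b) : ¬a * b ∣ a := by
  rintro ⟨c, hc⟩
  have hbc : IsUnit (1 - b * c) :=
    isUnit_one_sub_self_of_mem_nonunits _ fun h ↦ hb (isUnit_of_mul_isUnit_left h)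
  exact ha <| hbc.mul_left_eq_zero.mp <| by linear_combination hc

lemma mk_mul_eq_mul_left {a : R} (ha : a ≠ 0) (b : R) :
    #{y : R | a * y = a * b} = #(stabilizer Rˣ a) := by
  have mem_stabilizer (w : Rˣ) : w ∈ stabilizer Rˣ a ↔ w * a = a := Iff.rfl
  let translate (w : stabilizer Rˣ a) : {y : R | a * y = a * b} :=
    ⟨b + ((w : Rˣ) - 1), by
      have := (mem_stabilizer _).mp w.2
      rw [Set.mem_ofPred_eq]
      linear_combination this⟩
  refine (mk_congr <| Equiv.ofBijective translate ⟨fun w w' h ↦ ?_, fun ⟨y, hy⟩ ↦ ?_⟩).symm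
  · exact Subtype.ext <| Units.ext <| sub_left_injective <| add_right_injective b <|
      congrArg Subtype.val h
  · have hann : a * (y - b) = 0 := by rw [mul_sub, hy, sub_self]
    obtain ⟨w, hw⟩ := isUnit_one_add_of_mul_eq_zero ha hann
    refine ⟨⟨w, ?_⟩, ?_⟩
    · rw [mem_stabilizer, hw]
      linear_combination hann
    · simp [translate, hw]

lemma mk_mul_eq_of_mem_orbit {a m x : R} (ha : a ≠ 0) (ham : a ∣ m) (hx : x ∈ orbit Rˣ a) :
    #{y : R | x * y = m} = #(stabilizer Rˣ a) := by
  obtain ⟨b, rfl⟩ := ham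
  obtain ⟨w, rfl⟩ := hx
  rw [← mk_mul_eq_mul_left ha b]
  refine mk_congr <| w.mulLeft.subtypeEquiv fun y ↦ ?_
  simp [Units.smul_def, mul_comm, mul_left_comm]

lemma mk_mem_orbit_and_mul_eq {a m : R} (ha : a ≠ 0) (ham : a ∣ m) :
    #{s : R × R | s.1 ∈ orbit Rˣ a ∧ s.1 * s.2 = m} = #Rˣ := by
  let fiberwise : {s : R × R | s.1 ∈ orbit Rˣ a ∧ s.1 * s.2 = m} ≃
      Σ x : orbit Rˣ a, {y : R | (x : R) * y = m} :=
    { toFun s := ⟨⟨s.1.1, s.2.1⟩, s.1.2, s.2.2⟩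
      invFun p := ⟨(p.1, p.2), p.1.2, p.2.2⟩ }
  calc #{s : R × R | s.1 ∈ orbit Rˣ a ∧ s.1 * s.2 = m}
      = sum fun x : orbit Rˣ a ↦ #{y : R | (x : R) * y = m} := by
        rw [mk_congr fiberwise, mk_sigma]
    _ = #(orbit Rˣ a) * #(stabilizer Rˣ a) := by
        simp_rw [fun x : orbit Rˣ a ↦ mk_mul_eq_of_mem_orbit ha ham x.2, sum_const']
    _ = #Rˣ := by
        rw [mul_def, mk_congr (orbitProdStabilizerEquivGroup Rˣ a)]

variable {π : R}

lemma not_isUnit_of_maximalIdeal_eq_span (hπ : maximalIdeal R = Ideal.span {π}) : ¬IsUnit π :=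
  (mem_maximalIdeal π).mp (hπ ▸ Ideal.mem_span_singleton_self π)

lemma mem_orbit_pow_of_dvd_of_not_dvd (hπ : maximalIdeal R = Ideal.span {π}) {k : ℕ} {x : R}
    (hdvd : π ^ k ∣ x) (hndvd : ¬π ^ (k + 1) ∣ x) : x ∈ orbit Rˣ (π ^ k) := by
  obtain ⟨c, rfl⟩ := hdvd
  have hc : IsUnit c := by
    rw [← notMem_maximalIdeal, hπ, Ideal.mem_span_singleton]
    exact fun h ↦ hndvd <| pow_succ π k ▸ mul_dvd_mul_left _ h
  exact ⟨hc.unit, mul_comm _ _⟩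

lemma exists_mem_orbit_pow_of_not_dvd (hπ : maximalIdeal R = Ideal.span {π}) {t : ℕ} {x : R}
    (hx : ¬π ^ (t + 1) ∣ x) : ∃ k : Fin (t + 1), x ∈ orbit Rˣ (π ^ (k : ℕ)) := by
  have hfin : FiniteMultiplicity π x := ⟨t, hx⟩
  have hlt : multiplicity π x < t + 1 := hfin.multiplicity_lt_iff_not_dvd.mpr hx
  exact ⟨⟨_, hlt⟩, mem_orbit_pow_of_dvd_of_not_dvd hπ (pow_multiplicity_dvd π x)
    (hfin.not_pow_dvd_of_multiplicity_lt (Nat.lt_succ_self _))⟩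

lemma disjoint_orbit_pow (hπ : ¬IsUnit π) {i j : ℕ} (hij : i < j) (hi : π ^ i ≠ 0) :
    Disjoint (orbit Rˣ (π ^ i)) (orbit Rˣ (π ^ j)) := by
  rw [Set.disjoint_left]
  rintro _ ⟨w, rfl⟩ ⟨w', hw'⟩
  have hdvd : π ^ j ∣ π ^ i := by
    rw [← Units.dvd_mul_left (u := w)]
    exact ⟨w', hw'.symm.trans (mul_comm _ _)⟩
  exact not_mul_dvd_self hi hπ <| pow_succ π i ▸ (pow_dvd_pow π hij).trans hdvd

lemma setOf_mul_eq_pow_mul_unit_eq_iUnion (hπ : maximalIdeal R = Ideal.span {π}) {t : ℕ}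
    (ht : π ^ t ≠ 0) (u : Rˣ) :
    {s : R × R | s.1 * s.2 = π ^ t * u} =
      ⋃ k : Fin (t + 1), {s | s.1 ∈ orbit Rˣ (π ^ (k : ℕ)) ∧ s.1 * s.2 = π ^ t * u} := by
  have hndvd : ¬π ^ (t + 1) ∣ π ^ t * u := by
    rw [Units.dvd_mul_right, pow_succ]
    exact not_mul_dvd_self ht (not_isUnit_of_maximalIdeal_eq_span hπ)
  ext s
  simp only [Set.mem_iUnion, Set.mem_ofPred_eq, exists_and_right, iff_and_self]
  exact fun hs ↦ exists_mem_orbit_pow_of_not_dvd hπ fun h ↦ hndvd <| hs ▸ h.mul_right s.2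

/-- Cardinals are used so that the count is also meaningful when `R` is infinite. -/
theorem stmt_9_general (hπ : maximalIdeal R = Ideal.span {π}) {t : ℕ} (ht : π ^ t ≠ 0)
    (u : Rˣ) : #{s : R × R // s.1 * s.2 = π ^ t * u} = (t + 1) * #Rˣ := by
  have hpow (k : Fin (t + 1)) : π ^ (k : ℕ) ≠ 0 := ne_zero_of_dvd_ne_zero ht (pow_dvd_pow π k.is_le)
  have hdisj : Pairwise fun i j : Fin (t + 1) ↦
      Disjoint {s : R × R | s.1 ∈ orbit Rˣ (π ^ (i : ℕ)) ∧ s.1 * s.2 = π ^ t * u}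
        {s | s.1 ∈ orbit Rˣ (π ^ (j : ℕ)) ∧ s.1 * s.2 = π ^ t * u} := by
    refine (pairwise_disjoint_on _).mpr fun i j hij ↦ ?_
    have := disjoint_orbit_pow (not_isUnit_of_maximalIdeal_eq_span hπ) hij (hpow i)
    exact Set.disjoint_left.mpr fun s hs hs' ↦ Set.disjoint_left.mp this hs.1 hs'.1
  calc #{s : R × R | s.1 * s.2 = π ^ t * u}
      = sum fun k : Fin (t + 1) ↦
          #{s : R × R | s.1 ∈ orbit Rˣ (π ^ (k : ℕ)) ∧ s.1 * s.2 = π ^ t * u} := by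
        rw [setOf_mul_eq_pow_mul_unit_eq_iUnion hπ ht u, ← mk_iUnion_eq_sum_mk_lift hdisj,
          lift_uzero]
    _ = (t + 1) * #Rˣ := by
        simp_rw [fun k : Fin (t + 1) ↦ mk_mem_orbit_and_mul_eq (hpow k)
          ((pow_dvd_pow π k.is_le).mul_right (u : R)), sum_const]
        simp

end LocalRing

section ZModPrimePow

variable {p n : ℕ} [Fact p.Prime]

lemma isUnit_zmod_prime_pow_iff (hn : n ≠ 0) (c : ZMod (p ^ n)) :
    IsUnit c ↔ ¬(p : ZMod (p ^ n)) ∣ c := by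
  obtain ⟨a, rfl⟩ := ZMod.natCast_zmod_surjective c
  rw [ZMod.isUnit_iff_coprime, Nat.coprime_pow_right_iff (Nat.pos_of_ne_zero hn), Nat.coprime_comm,
    (Fact.out : p.Prime).coprime_iff_not_dvd]
  refine not_congr ⟨fun h ↦ Nat.cast_dvd_cast h, fun h ↦ ?_⟩
  simpa [ZMod.natCast_eq_zero_iff] using map_dvd (ZMod.castHom (dvd_pow_self p hn) (ZMod p)) h

lemma isLocalRing_zmod_prime_pow (hn : n ≠ 0) : IsLocalRing (ZMod (p ^ n)) := by
  have : Fact (1 < p ^ n) := ⟨Nat.one_lt_pow hn (Fact.out : p.Prime).one_lt⟩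
  refine .of_nonunits_add fun a b ha hb ↦ ?_
  simp only [mem_nonunits_iff, isUnit_zmod_prime_pow_iff hn, not_not] at ha hb ⊢
  exact dvd_add ha hb

lemma maximalIdeal_zmod_prime_pow [IsLocalRing (ZMod (p ^ n))] (hn : n ≠ 0) :
    maximalIdeal (ZMod (p ^ n)) = Ideal.span {(p : ZMod (p ^ n))} := by
  ext c
  rw [mem_maximalIdeal, mem_nonunits_iff, isUnit_zmod_prime_pow_iff hn, not_not,
    Ideal.mem_span_singleton]

lemma natCast_pow_ne_zero_zmod_prime_pow {t : ℕ} (ht : t < n) : (p : ZMod (p ^ n)) ^ t ≠ 0 := by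
  rw [← Nat.cast_pow, Ne, ZMod.natCast_eq_zero_iff,
    Nat.pow_dvd_pow_iff_le_right (Fact.out : p.Prime).one_lt]
  exact ht.not_ge

theorem natCard_zmod_prime_pow_mul_eq_pow_mul_unit {t : ℕ} (ht : t < n) (u : (ZMod (p ^ n))ˣ) :
    Nat.card {s : ZMod (p ^ n) × ZMod (p ^ n) // s.1 * s.2 = (p : ZMod (p ^ n)) ^ t * u} =
      (t + 1) * (p ^ (n - 1) * (p - 1)) := by
  have hn : n ≠ 0 := Nat.ne_zero_of_lt ht
  have : IsLocalRing (ZMod (p ^ n)) := isLocalRing_zmod_prime_pow hn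
  have hunits : Nat.card (ZMod (p ^ n))ˣ = p ^ (n - 1) * (p - 1) := by
    rw [Nat.card_eq_fintype_card, ZMod.card_units_eq_totient,
      Nat.totient_prime_pow Fact.out (Nat.pos_of_ne_zero hn)]
  rw [← hunits, Nat.card, Nat.card, stmt_9_general (maximalIdeal_zmod_prime_pow hn)
    (natCast_pow_ne_zero_zmod_prime_pow ht) u, map_mul]
  norm_cast

end ZModPrimePow

/-- For `m = 2^t u` with `u` a unit of `ℤ/2^r` and `t < r`, the number of pairs
`(x, y)` with `x y = m` equals `(t+1) 2^{r-1}`. -/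
theorem stmt_9 (r t : ℕ) (hr : 1 ≤ r) (ht : t < r) (u : (ZMod (2 ^ r))ˣ) :
    Nat.card {s : ZMod (2 ^ r) × ZMod (2 ^ r) //
      s.1 * s.2 = (2 : ZMod (2 ^ r)) ^ t * (u : ZMod (2 ^ r))} = (t + 1) * 2 ^ (r - 1) := by
  simpa using natCard_zmod_prime_pow_mul_eq_pow_mul_unit (p := 2) ht u
end

section
/- Let r and a be natural numbers with 2a < r. Then for every k ∈ Z_{2^r}, the number of elements t ∈ Z_{2^r} with t^2 = 2^{2a} + 2^{2a+3} k equals 2^{min(a+2, r-a-1)}; moreover, every such t is of the form 2^a u for a unit u of Z_{2^r}. -/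
/-! Since `w² + w = 2k` is solvable by Newton's method (the derivative at `0` is `1` and `2` is
nilpotent), `1 + 8k = (1 + 2w)²` is the square of an odd `s`, and the equation becomes
`t² = (2ᵃs)²`. Dividing by `2ᵃ` leaves `y² ≡ s²` modulo `2 ^ (r - 2a)`. Exactly one of the two
integers `(y - s)/2` and `(y + s)/2` is odd, so the other one absorbs all powers of `2`. Hence the
solutions are the residue classes of `±2ᵃs` modulo `2 ^ max (a + 1) (r - a - 1)`, two classes that
coincide precisely when `r - a - 1 ≤ a + 1`. -/

theorem exists_sq_add_self_eq_of_isNilpotent {R : Type*} [CommRing R] {c : R}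
    (hc : IsNilpotent c) : ∃ w : R, w ^ 2 + w = c := by
  let P : Polynomial R := .X ^ 2 + .X - .C c
  have hP (w : R) : Polynomial.aeval w P = w ^ 2 + w - c := by simp [P]
  have hP' : Polynomial.aeval (0 : R) P.derivative = 1 := by simp [P]
  have h_nil : IsNilpotent (Polynomial.aeval (0 : R) P) := by simpa [hP] using hc
  have h_unit : IsUnit (Polynomial.aeval (0 : R) P.derivative) := hP' ▸ isUnit_one
  obtain ⟨w, ⟨-, hw⟩, -⟩ := Polynomial.existsUnique_nilpotent_sub_and_aeval_eq_zero h_nil h_unit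
  exact ⟨w, sub_eq_zero.mp (hP w ▸ hw)⟩

theorem exists_odd_intCast_sq_eq_one_add_eight_mul {r : ℕ} (k : ZMod (2 ^ r)) :
    ∃ s : ℤ, Odd s ∧ (s : ZMod (2 ^ r)) ^ 2 = 1 + 8 * k := by
  have h_two : (2 : ZMod (2 ^ r)) ^ r = 0 := mod_cast ZMod.natCast_self (2 ^ r)
  have h_nil : IsNilpotent (2 * k) := (Commute.all 2 k).isNilpotent_mul_right ⟨r, h_two⟩
  obtain ⟨w, hw⟩ := exists_sq_add_self_eq_of_isNilpotent h_nil
  obtain ⟨w, rfl⟩ := ZMod.intCast_surjective w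
  refine ⟨2 * w + 1, odd_two_mul_add_one w, ?_⟩
  push_cast
  linear_combination 4 * hw

theorem isUnit_intCast_zmod_two_pow_of_odd {s : ℤ} (hs : Odd s) (r : ℕ) :
    IsUnit (s : ZMod (2 ^ r)) := by
  rw [ZMod.coe_int_isUnit_iff_isCoprime]
  exact mod_cast (Int.isCoprime_two_left.mpr hs).pow_left

theorem pow_dvd_mul_iff_of_not_dvd_add {R : Type*} [CommSemiring R] [IsCancelMulZero R]
    {p u v : R} (hp : Prime p) (h : ¬ p ∣ u + v) (n : ℕ) :
    p ^ n ∣ u * v ↔ p ^ n ∣ u ∨ p ^ n ∣ v := by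
  refine ⟨fun huv ↦ ?_, fun huv ↦ huv.elim (·.mul_right v) (·.mul_left u)⟩
  by_cases hu : p ∣ u
  · exact .inl <| hp.pow_dvd_of_dvd_mul_right n (fun hv ↦ h (dvd_add hu hv)) huv
  · exact .inr <| hp.pow_dvd_of_dvd_mul_left n hu huv

theorem sq_modEq_sq_two_pow_iff_of_odd {y s : ℤ} (hy : Odd y) (hs : Odd s) (n : ℕ) :
    y ^ 2 ≡ s ^ 2 [ZMOD 2 ^ n] ↔
      y ≡ s [ZMOD 2 ^ max 1 (n - 1)] ∨ y ≡ -s [ZMOD 2 ^ max 1 (n - 1)] := by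
  obtain ⟨z, hz⟩ : (2 : ℤ) ∣ y - s := (hy.sub_odd hs).two_dvd
  obtain rfl : y = 2 * z + s := by omega
  have h_add : ¬ (2 : ℤ) ∣ z + (z + s) := by
    rw [← even_iff_two_dvd, Int.not_even_iff_odd]
    convert hy using 1
    ring
  -- Truncated subtraction is harmless in `n - 2`: both sides hold when `n ≤ 2`.
  have h_four : (2 : ℤ) ^ n ∣ 4 * (z * (z + s)) ↔ 2 ^ (n - 2) ∣ z * (z + s) := by
    match n with
    | 0 => simp
    | 1 => simpa using Dvd.intro (2 * (z * (z + s))) (by ring)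
    | m + 2 =>
      rw [pow_add, mul_comm, Nat.add_sub_cancel]
      exact mul_dvd_mul_iff_left (by simp)
  have h_exp : (2 : ℤ) ^ max 1 (n - 1) = 2 * 2 ^ (n - 2) := by
    rw [← pow_succ']
    congr 1
    omega
  calc (2 * z + s) ^ 2 ≡ s ^ 2 [ZMOD 2 ^ n]
      ↔ 2 ^ n ∣ 4 * (z * (z + s)) := by
        rw [Int.modEq_comm, Int.modEq_iff_dvd]
        ring_nf
    _ ↔ 2 ^ (n - 2) ∣ z ∨ 2 ^ (n - 2) ∣ z + s := by
        rw [h_four, pow_dvd_mul_iff_of_not_dvd_add Int.prime_two h_add]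
    _ ↔ 2 * 2 ^ (n - 2) ∣ 2 * z ∨ 2 * 2 ^ (n - 2) ∣ 2 * (z + s) := by
        simp only [mul_dvd_mul_iff_left (two_ne_zero (α := ℤ))]
    _ ↔ _ := by
        rw [h_exp, Int.modEq_comm, Int.modEq_iff_dvd, Int.modEq_comm (b := -s), Int.modEq_iff_dvd]
        ring_nf

theorem exists_odd_eq_two_pow_mul_of_modEq {x c : ℤ} (hc : Odd c) {a j : ℕ} (ha : a < j)
    (h : x ≡ 2 ^ a * c [ZMOD 2 ^ j]) : ∃ y, Odd y ∧ x = 2 ^ a * y := by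
  obtain ⟨q, hq⟩ := (h.symm.of_dvd (pow_dvd_pow 2 (Nat.succ_le_of_lt ha))).dvd
  rw [pow_succ] at hq
  exact ⟨c + 2 * q, hc.add_even (even_two_mul q), by linear_combination hq⟩

theorem exists_odd_eq_two_pow_mul_of_sq_modEq {x s : ℤ} (hs : Odd s) {r a : ℕ} (ha : 2 * a < r)
    (h : x ^ 2 ≡ (2 ^ a * s) ^ 2 [ZMOD 2 ^ r]) : ∃ y, Odd y ∧ x = 2 ^ a * y := by
  rw [mul_pow, ← pow_mul'] at h
  obtain ⟨c, hc, hxc⟩ := exists_odd_eq_two_pow_mul_of_modEq hs.pow ha h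
  rw [pow_mul'] at hxc
  obtain ⟨y, rfl⟩ := (Int.pow_dvd_pow_iff two_ne_zero).mp (Dvd.intro c hxc.symm)
  rw [mul_pow] at hxc
  obtain rfl : y ^ 2 = c := mul_left_cancel₀ (by positivity) hxc
  exact ⟨y, (Int.odd_pow' two_ne_zero).mp hc, rfl⟩

theorem sq_modEq_sq_two_pow_mul_iff {s : ℤ} (hs : Odd s) {r a : ℕ} (ha : 2 * a < r) (x : ℤ) :
    x ^ 2 ≡ (2 ^ a * s) ^ 2 [ZMOD 2 ^ r] ↔
      x ≡ 2 ^ a * s [ZMOD 2 ^ max (a + 1) (r - a - 1)] ∨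
        x ≡ -(2 ^ a * s) [ZMOD 2 ^ max (a + 1) (r - a - 1)] := by
  by_cases hx : ∃ y, Odd y ∧ x = 2 ^ a * y
  · obtain ⟨y, hy, rfl⟩ := hx
    have h_pow : (2 : ℤ) ^ a ≠ 0 := by positivity
    have h_sq : (2 : ℤ) ^ r = (2 ^ a) ^ 2 * 2 ^ (r - 2 * a) := by
      rw [← pow_mul, ← pow_add]
      congr 1
      omega
    have h_max : (2 : ℤ) ^ max (a + 1) (r - a - 1) = 2 ^ a * 2 ^ max 1 (r - 2 * a - 1) := by
      rw [← pow_add]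
      congr 1
      omega
    simp only [h_sq, h_max, mul_pow, ← mul_neg, Int.ModEq.mul_left_cancel_iff' h_pow,
      Int.ModEq.mul_left_cancel_iff' (pow_ne_zero 2 h_pow)]
    exact sq_modEq_sq_two_pow_iff_of_odd hy hs (r - 2 * a)
  · have h_lt : a < max (a + 1) (r - a - 1) := by omega
    refine iff_of_false (hx ∘ exists_odd_eq_two_pow_mul_of_sq_modEq hs ha) ?_
    rw [← mul_neg]
    rintro (h | h)
    · exact hx (exists_odd_eq_two_pow_mul_of_modEq hs h_lt h)
    · exact hx (exists_odd_eq_two_pow_mul_of_modEq hs.neg h_lt h)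

theorem card_preimage_eq_card_ker_mul {G H : Type*} [AddGroup G] [AddGroup H] {f : G →+ H}
    (hf : Function.Surjective f) (S : Set H) :
    Nat.card (f ⁻¹' S) = Nat.card f.ker * Nat.card S := by
  let e : f ⁻¹' S ≃ S × f.ker :=
    calc
      (f ⁻¹' S : Set G) ≃ Σ h : S, {g // f g = h} :=
        (Equiv.sigmaSubtypeFiberEquivSubtype f (p := (· ∈ f ⁻¹' S)) (q := (· ∈ S))
          fun _ ↦ Iff.rfl).symm
      _ ≃ Σ _ : S, f.ker := Equiv.sigmaCongrRight fun h ↦ f.fiberEquivKerOfSurjective hf h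
      _ ≃ S × f.ker := Equiv.sigmaEquivProd S f.ker
  rw [Nat.card_congr e, Nat.card_prod, mul_comm]

theorem card_castHom_preimage {m n : ℕ} [NeZero n] (h : m ∣ n) (S : Set (ZMod m)) :
    Nat.card (ZMod.castHom h (ZMod m) ⁻¹' S) = n / m * Nat.card S := by
  let f : ZMod n →+ ZMod m := (ZMod.castHom h (ZMod m)).toAddMonoidHom
  have hf : Function.Surjective f := ZMod.castHom_surjective h
  have hm : 0 < m := Nat.pos_of_dvd_of_pos h (NeZero.pos n)
  have h_ker : n = Nat.card f.ker * m := by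
    simpa using card_preimage_eq_card_ker_mul hf Set.univ
  rw [Nat.div_eq_of_eq_mul_left hm h_ker]
  exact card_preimage_eq_card_ker_mul hf S

theorem zmod_two_pow_mul_eq_neg_self_iff {s : ℤ} (hs : Odd s) (a j : ℕ) :
    (2 ^ a * s : ZMod (2 ^ j)) = -(2 ^ a * s) ↔ j ≤ a + 1 := by
  have h_unit := isUnit_intCast_zmod_two_pow_of_odd hs j
  calc (2 ^ a * s : ZMod (2 ^ j)) = -(2 ^ a * s)
      ↔ (2 : ZMod (2 ^ j)) ^ (a + 1) * s = 0 := by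
        rw [eq_neg_iff_add_eq_zero]
        ring_nf
    _ ↔ ((2 ^ (a + 1) : ℕ) : ZMod (2 ^ j)) = 0 := by
        rw [h_unit.mul_left_eq_zero]
        push_cast
        rfl
    _ ↔ j ≤ a + 1 := by
        rw [ZMod.natCast_eq_zero_iff, Nat.pow_dvd_pow_iff_le_right']

section

variable {s : ℤ} (hs : Odd s) {r a : ℕ} (ha : 2 * a < r)
include hs ha

theorem exists_unit_eq_two_pow_mul_of_sq_eq_sq {t : ZMod (2 ^ r)}
    (ht : t ^ 2 = (2 ^ a * s) ^ 2) : ∃ u : (ZMod (2 ^ r))ˣ, t = 2 ^ a * u := by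
  obtain ⟨x, rfl⟩ := ZMod.intCast_surjective t
  have hx : x ^ 2 ≡ (2 ^ a * s) ^ 2 [ZMOD 2 ^ r] :=
    mod_cast (ZMod.intCast_eq_intCast_iff _ _ _).mp (mod_cast ht)
  obtain ⟨y, hy, rfl⟩ := exists_odd_eq_two_pow_mul_of_sq_modEq hs ha hx
  obtain ⟨u, hu⟩ := isUnit_intCast_zmod_two_pow_of_odd hy r
  exact ⟨u, by simp [hu]⟩

theorem setOf_sq_eq_sq_eq_castHom_preimage (h : 2 ^ max (a + 1) (r - a - 1) ∣ 2 ^ r) :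
    {t : ZMod (2 ^ r) | t ^ 2 = (2 ^ a * s) ^ 2} =
      ZMod.castHom h (ZMod (2 ^ max (a + 1) (r - a - 1))) ⁻¹'
        {2 ^ a * (s : ZMod _), -(2 ^ a * (s : ZMod _))} := by
  ext t
  obtain ⟨x, rfl⟩ := ZMod.intCast_surjective t
  have h_iff := sq_modEq_sq_two_pow_mul_iff hs ha x
  have h_cast (m : ℕ) (b c : ℤ) : b ≡ c [ZMOD 2 ^ m] ↔ (b : ZMod (2 ^ m)) = c := by
    simp [ZMod.intCast_eq_intCast_iff]
  simpa [h_cast] using h_iff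

theorem card_sq_eq_sq_two_pow_mul :
    Nat.card {t : ZMod (2 ^ r) // t ^ 2 = (2 ^ a * s) ^ 2} = 2 ^ min (a + 2) (r - a - 1) := by
  have h_dvd : 2 ^ max (a + 1) (r - a - 1) ∣ 2 ^ r := pow_dvd_pow 2 (by omega)
  have h_pair := zmod_two_pow_mul_eq_neg_self_iff hs a (max (a + 1) (r - a - 1))
  change Nat.card {t : ZMod (2 ^ r) | t ^ 2 = (2 ^ a * s) ^ 2} = _
  rw [setOf_sq_eq_sq_eq_castHom_preimage hs ha h_dvd, card_castHom_preimage,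
    Nat.pow_div (by omega) two_pos, Nat.card_coe_set_eq]
  by_cases hr : r - a - 1 ≤ a + 1
  · rw [← h_pair.mpr (by omega), Set.pair_eq_singleton, Set.ncard_singleton, mul_one]
    congr 1
    omega
  · rw [Set.ncard_pair (h_pair.not.mpr (by omega)), ← pow_succ]
    congr 1
    omega

end

/-- For `2a < r` and any `k`, the number of `t ∈ ℤ/2^r` with
`t² = 2^{2a} + 2^{2a+3} k` equals `2^{min(a+2, r-a-1)}`, and every such `t`
equals `2^a` times a unit. -/
theorem stmt_12 (r a : ℕ) (ha : 2 * a < r) (k : ZMod (2 ^ r)) :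
    Nat.card {t : ZMod (2 ^ r) //
      t ^ 2 = (2 : ZMod (2 ^ r)) ^ (2 * a) + (2 : ZMod (2 ^ r)) ^ (2 * a + 3) * k}
      = 2 ^ min (a + 2) (r - a - 1) ∧
    ∀ t : ZMod (2 ^ r),
      t ^ 2 = (2 : ZMod (2 ^ r)) ^ (2 * a) + (2 : ZMod (2 ^ r)) ^ (2 * a + 3) * k →
      ∃ u : (ZMod (2 ^ r))ˣ, t = (2 : ZMod (2 ^ r)) ^ a * (u : ZMod (2 ^ r)) := by
  obtain ⟨s, hs, h_sq⟩ := exists_odd_intCast_sq_eq_one_add_eight_mul k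
  have h_rhs : (2 : ZMod (2 ^ r)) ^ (2 * a) + 2 ^ (2 * a + 3) * k = (2 ^ a * s) ^ 2 := by
    rw [mul_pow, h_sq]
    ring
  rw [h_rhs]
  exact ⟨card_sq_eq_sq_two_pow_mul hs ha,
    fun t ↦ exists_unit_eq_two_pow_mul_of_sq_eq_sq hs ha⟩
end

section
/- Let r ≥ 1 and let P(x) = a x^2 + b x + c be a polynomial over Z_{2^r}, where b = 2^h g for a natural number h < r and a unit g of Z_{2^r}, and where a is divisible by 2^{h+1} in Z_{2^r}. Then for every y ∈ Z_{2^r}: if y - c is divisible by 2^h in Z_{2^r}, the number of x ∈ Z_{2^r} with P(x) = y equals 2^h, and otherwise there is no x ∈ Z_{2^r} with P(x) = y. -/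
/-!
With `a = 2^(h+1) a'`, the polynomial is `P(x) = 2^h (g x + 2 a' x²) + c`. Differences of the inner
map factor as `(x - z)` times a unit plus a nilpotent, that is, times a unit, so the inner map is a
permutation. Hence `P - c` takes each value as often as multiplication by `2^h` does, and the
nonempty fibres of the latter are the cosets of its kernel, which has `2^h` elements.
-/

open Polynomial

theorem injective_isUnit_mul_add_isNilpotent_mul_eval {R : Type*} [CommRing R] {u m : R}
    (hu : IsUnit u) (hm : IsNilpotent m) (q : R[X]) :
    Function.Injective fun x => u * x + m * q.eval x := by
  intro x z (hxz : u * x + m * q.eval x = u * z + m * q.eval z)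
  obtain ⟨k, hk : q.eval x - q.eval z = (x - z) * k⟩ := q.sub_dvd_eval_sub x z
  have hunit : IsUnit (u + m * k) :=
    ((Commute.all m k).isNilpotent_mul_right hm).isUnit_add_left_of_commute hu (Commute.all _ _)
  have hfactor : (u + m * k) * (x - z) = 0 := by
    linear_combination hxz - m * hk
  exact sub_eq_zero.mp (hunit.mul_right_eq_zero.mp hfactor)

theorem natCard_nsmul_eq_nsmul {G : Type*} [AddCommGroup G] [IsAddCyclic G] [Finite G]
    (d : ℕ) (w : G) : Nat.card {z : G // d • z = d • w} = (Nat.card G).gcd d := by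
  rw [← IsAddCyclic.card_nsmulAddMonoidHom_ker]
  exact Nat.card_congr ((nsmulAddMonoidHom d).fiberEquivKer w)

theorem isNilpotent_natCast_zmod_pow (p r : ℕ) : IsNilpotent (p : ZMod (p ^ r)) :=
  ⟨r, mod_cast ZMod.natCast_self (p ^ r)⟩

theorem stmt_14_general {n d : ℕ} [NeZero n] (hd : d ∣ n) {u m : ZMod n} (hu : IsUnit u)
    (hm : IsNilpotent m) (q : (ZMod n)[X]) (c y : ZMod n) :
    ((d : ZMod n) ∣ y - c →
      Nat.card {x : ZMod n // d * m * q.eval x + d * u * x + c = y} = d) ∧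
    (¬ (d : ZMod n) ∣ y - c →
      Nat.card {x : ZMod n // d * m * q.eval x + d * u * x + c = y} = 0) := by
  have hbij : Function.Bijective fun x => u * x + m * q.eval x :=
    Finite.injective_iff_bijective.mp (injective_isUnit_mul_add_isNilpotent_mul_eval hu hm q)
  have hP (x : ZMod n) : d * m * q.eval x + d * u * x + c = y ↔
      y - c = d * (u * x + m * q.eval x) := by
    rw [sub_eq_iff_eq_add, eq_comm]
    ring_nf
  simp only [hP]
  constructor
  · rintro ⟨w, hw⟩
    calc Nat.card {x : ZMod n // y - c = d * (u * x + m * q.eval x)}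
        = Nat.card {z : ZMod n // d • z = d • w} :=
          Nat.card_congr <| (Equiv.ofBijective _ hbij).subtypeEquiv fun x => by
            rw [Equiv.ofBijective_apply, nsmul_eq_mul, nsmul_eq_mul, hw, eq_comm]
      _ = n.gcd d := by rw [natCard_nsmul_eq_nsmul, Nat.card_zmod]
      _ = d := Nat.gcd_eq_right hd
  · intro hndvd
    have : IsEmpty {x : ZMod n // y - c = d * (u * x + m * q.eval x)} :=
      ⟨fun ⟨_, hx⟩ => hndvd ⟨_, hx⟩⟩
    exact Nat.card_of_isEmpty

/-- For `P(x) = ax² + bx + c` over `ℤ/2^r` with `b = 2^h g` (`g` a unit, `h < r`)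
and `2^{h+1} ∣ a`: if `2^h ∣ y - c` then `P(x) = y` has exactly `2^h` solutions,
otherwise none. -/
theorem stmt_14 (r h : ℕ) (hr : 1 ≤ r) (hh : h < r)
    (a b c : ZMod (2 ^ r)) (g : (ZMod (2 ^ r))ˣ)
    (hb : b = (2 : ZMod (2 ^ r)) ^ h * (g : ZMod (2 ^ r)))
    (ha : ∃ a' : ZMod (2 ^ r), a = (2 : ZMod (2 ^ r)) ^ (h + 1) * a')
    (y : ZMod (2 ^ r)) :
    ((∃ c' : ZMod (2 ^ r), y - c = (2 : ZMod (2 ^ r)) ^ h * c') →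
      Nat.card {x : ZMod (2 ^ r) // a * x ^ 2 + b * x + c = y} = 2 ^ h) ∧
    ((¬ ∃ c' : ZMod (2 ^ r), y - c = (2 : ZMod (2 ^ r)) ^ h * c') →
      Nat.card {x : ZMod (2 ^ r) // a * x ^ 2 + b * x + c = y} = 0) := by
  obtain ⟨a', rfl⟩ := ha
  have hcard := stmt_14_general (pow_dvd_pow 2 hh.le) g.isUnit (isNilpotent_natCast_zmod_pow 2 r)
    (C a' * X ^ 2) c y
  simpa only [hb, pow_succ _ h, mul_assoc, dvd_def, eval_mul, eval_C, eval_X_pow, Nat.cast_pow,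
    Nat.cast_ofNat] using hcard
end

section
/- Let r ≥ 1 and let P(x) = a x^2 + b x + c be a polynomial over Z_{2^r}, where a = 2^m q and b = 2^m g for a natural number m < r and units q, g of Z_{2^r}. Then for every y ∈ Z_{2^r}: if y - c is divisible by 2^{m+1} in Z_{2^r}, the number of x ∈ Z_{2^r} with P(x) = y equals 2^{m+1}, and otherwise there is no x ∈ Z_{2^r} with P(x) = y. -/
/-!
Let `φ : R → 𝔽₂` be a local homomorphism from a finite commutative ring. A quadratic
`f x = q x² + g x` with `q`, `g` units takes values in `ker φ`, and
`f x - f y = (q (x + y) + g) (x - y)` has a unit as first factor when `φ x = φ y`, since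
`x + y ∈ ker φ`. Hence `x ↦ (f x, φ x)` is an injection `R → ker φ × 𝔽₂` between sets of equal
size, so `f` is exactly two-to-one onto `ker φ`. If `d ≠ 0`, the annihilator of `d` lies in `ker φ`,
so the solutions of `d f x = d w` with `w ∈ ker φ` are the preimages of a full coset of it.
-/

theorem card_ker_prod_zmod {R : Type*} [Ring R] {n : ℕ} (φ : R →+* ZMod n) :
    Nat.card (RingHom.ker φ × ZMod n) = Nat.card R := by
  have hindex : (φ : R →+ ZMod n).ker.index = Nat.card (ZMod n) := by
    rw [AddSubgroup.index_ker, AddMonoidHom.range_eq_top.mpr (ZMod.ringHom_surjective φ),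
      AddSubgroup.card_top]
  rw [Nat.card_prod, ← hindex]
  exact (φ : R →+ ZMod n).ker.card_mul_index

section LocalHomToZModTwo

variable {R : Type*} [CommRing R] (φ : R →+* ZMod 2)

theorem map_units_zmod_two_eq_one (u : Rˣ) : φ u = 1 :=
  congrArg Units.val (Subsingleton.elim (Units.map (φ : R →* ZMod 2) u) 1)

theorem map_unit_quadratic_eq_zero (q g : Rˣ) (x : R) : φ (q * x ^ 2 + g * x) = 0 := by
  have sq_add_self : ∀ e : ZMod 2, e ^ 2 + e = 0 := by decide
  simp only [map_add, map_mul, map_pow, map_units_zmod_two_eq_one, one_mul, sq_add_self]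

variable [IsLocalHom φ]

theorem isUnit_add_units_of_map_eq_zero {z : R} (hz : φ z = 0) (u : Rˣ) : IsUnit (z + u) := by
  apply IsUnit.of_map φ
  simp only [map_add, hz, map_units_zmod_two_eq_one, zero_add, isUnit_one]

theorem map_eq_zero_of_mul_eq_zero {d z : R} (hd : d ≠ 0) (h : d * z = 0) : φ z = 0 := by
  by_contra hz
  exact hd (((isUnit_iff_ne_zero.mpr hz).of_map φ).mul_left_eq_zero.mp h)

theorem eq_of_quadratic_eq_of_map_eq {q : R} {g : Rˣ} {x y : R}
    (hf : q * x ^ 2 + g * x = q * y ^ 2 + g * y) (hφ : φ x = φ y) : x = y := by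
  have hsum : φ (q * (x + y)) = 0 := by
    rw [map_mul, map_add, hφ, CharTwo.add_self_eq_zero, mul_zero]
  have hfactor : (q * (x + y) + g) * (x - y) = 0 := by linear_combination hf
  exact sub_eq_zero.mp
    ((isUnit_add_units_of_map_eq_zero φ hsum g).mul_right_eq_zero.mp hfactor)

variable [Finite R]

theorem existsUnique_unit_quadratic_eq_and_map_eq (q g : Rˣ) {z : R} (hz : φ z = 0) (e : ZMod 2) :
    ∃! x, q * x ^ 2 + g * x = z ∧ φ x = e := by
  let F (x : R) : RingHom.ker φ × ZMod 2 :=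
    (⟨q * x ^ 2 + g * x, map_unit_quadratic_eq_zero φ q g x⟩, φ x)
  have hF_inj : F.Injective := fun x y h ↦
    eq_of_quadratic_eq_of_map_eq φ (congrArg (·.1.1) h) (congrArg (·.2) h)
  have hF : F.Bijective := hF_inj.bijective_of_nat_card_le (card_ker_prod_zmod φ).le
  simpa [F, Prod.ext_iff, Subtype.ext_iff] using hF.existsUnique (⟨z, hz⟩, e)

theorem card_unit_quadratic_preimage (q g : Rˣ) {S : Set R} (hS : ∀ z ∈ S, φ z = 0) :
    Nat.card {x : R // q * x ^ 2 + g * x ∈ S} = 2 * Nat.card S := by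
  let F (x : {x : R // q * x ^ 2 + g * x ∈ S}) : ZMod 2 × S := (φ x, ⟨_, x.2⟩)
  have hF : F.Bijective := by
    rw [Function.bijective_iff_existsUnique]
    rintro ⟨e, z, hz⟩
    obtain ⟨x, ⟨rfl, rfl⟩, hx⟩ :=
      existsUnique_unit_quadratic_eq_and_map_eq φ q g (hS z hz) e
    refine ⟨⟨x, hz⟩, rfl, fun x' hx' ↦ Subtype.ext (hx x' ?_)⟩
    exact ⟨congrArg (·.2.1) hx', congrArg (·.1) hx'⟩
  rw [Nat.card_eq_of_bijective F hF, Nat.card_prod, Nat.card_zmod]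

theorem card_mul_unit_quadratic_eq_mul {d w : R} (hd : d ≠ 0) (q g : Rˣ) (hw : φ w = 0) :
    Nat.card {x : R // d * (q * x ^ 2 + g * x) = d * w} = 2 * Nat.card {z : R // d * z = 0} := by
  have hcoset : ∀ z ∈ {z | d * z = d * w}, φ z = 0 := fun z hz ↦ by
    have hsub : d * (z - w) = 0 := by rw [mul_sub, hz, sub_self]
    rw [← sub_add_cancel z w, map_add, map_eq_zero_of_mul_eq_zero φ hd hsub, hw, add_zero]
  let translate : {z : R // d * z = d * w} ≃ {z : R // d * z = 0} :=
    (Equiv.subRight w).subtypeEquiv fun z ↦ by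
      rw [Equiv.subRight_apply, mul_sub, sub_eq_zero]
  exact (card_unit_quadratic_preimage φ q g hcoset).trans
    (congrArg (2 * ·) (Nat.card_congr translate))

/-- The local homomorphism `φ` encodes that `R` is a local ring with residue field `𝔽₂` and maximal
ideal `ker φ`. -/
theorem stmt_15_general {d : R} (hd : d ≠ 0) (a b c : R) (q g : Rˣ)
    (ha : a = d * q) (hb : b = d * g) (y : R) :
    ((∃ w, φ w = 0 ∧ y - c = d * w) →
      Nat.card {x : R // a * x ^ 2 + b * x + c = y} = 2 * Nat.card {z : R // d * z = 0}) ∧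
    ((¬ ∃ w, φ w = 0 ∧ y - c = d * w) →
      Nat.card {x : R // a * x ^ 2 + b * x + c = y} = 0) := by
  have hsolution (x : R) :
      a * x ^ 2 + b * x + c = y ↔ d * (q * x ^ 2 + g * x) = y - c := by
    rw [ha, hb, eq_sub_iff_add_eq]
    ring_nf
  simp only [hsolution]
  refine ⟨?_, fun hnot ↦ ?_⟩
  · rintro ⟨w, hw, hyc⟩
    rw [hyc]
    exact card_mul_unit_quadratic_eq_mul φ hd q g hw
  · have : IsEmpty {x : R // d * (q * x ^ 2 + g * x) = y - c} :=
      ⟨fun x ↦ hnot ⟨_, map_unit_quadratic_eq_zero φ q g x, x.2.symm⟩⟩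
    exact Nat.card_of_isEmpty

end LocalHomToZModTwo

section ZMod

theorem isLocalHom_castHom_zmod_pow (p : ℕ) {n : ℕ} (hn : n ≠ 0) :
    IsLocalHom (ZMod.castHom (dvd_pow_self p hn) (ZMod p)) where
  map_nonunit x hx := by
    obtain ⟨k, rfl⟩ := ZMod.intCast_surjective x
    rw [map_intCast, ZMod.coe_int_isUnit_iff_isCoprime] at hx
    rw [ZMod.coe_int_isUnit_iff_isCoprime, Nat.cast_pow]
    exact hx.pow_left

theorem castHom_zmod_eq_zero_iff_dvd {m n : ℕ} (h : m ∣ n) (z : ZMod n) :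
    ZMod.castHom h (ZMod m) z = 0 ↔ (m : ZMod n) ∣ z := by
  constructor
  · obtain ⟨k, rfl⟩ := ZMod.intCast_surjective z
    rw [map_intCast, ZMod.intCast_zmod_eq_zero_iff_dvd]
    rintro ⟨t, rfl⟩
    exact ⟨t, by push_cast; rfl⟩
  · rintro ⟨t, rfl⟩
    rw [map_mul, map_natCast, ZMod.natCast_self, zero_mul]

theorem exists_castHom_eq_zero_and_eq_pow_mul_iff {p n : ℕ} (h : p ∣ n) (m : ℕ) (v : ZMod n) :
    (∃ w, ZMod.castHom h (ZMod p) w = 0 ∧ v = (p : ZMod n) ^ m * w) ↔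
      ∃ t, v = (p : ZMod n) ^ (m + 1) * t := by
  simp only [castHom_zmod_eq_zero_iff_dvd, pow_succ, mul_assoc]
  constructor
  · rintro ⟨_, ⟨t, rfl⟩, hv⟩
    exact ⟨t, hv⟩
  · rintro ⟨t, hv⟩
    exact ⟨p * t, dvd_mul_right _ t, hv⟩

theorem natCast_pow_ne_zero_zmod_pow {p m n : ℕ} (hp : 1 < p) (hm : m < n) :
    (p : ZMod (p ^ n)) ^ m ≠ 0 := by
  rw [← Nat.cast_pow, Ne, ZMod.natCast_eq_zero_iff, Nat.pow_dvd_pow_iff_le_right hp]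
  exact hm.not_ge

theorem card_natCast_mul_eq_zero_zmod (n k : ℕ) [NeZero n] :
    Nat.card {z : ZMod n // (k : ZMod n) * z = 0} = n.gcd k := by
  have hker := IsAddCyclic.card_nsmulAddMonoidHom_ker (G := ZMod n) k
  rw [Nat.card_zmod] at hker
  rw [← hker]
  refine Nat.card_congr (Equiv.subtypeEquivRight fun z ↦ ?_)
  rw [AddMonoidHom.mem_ker, nsmulAddMonoidHom_apply, nsmul_eq_mul]

theorem card_natCast_pow_mul_eq_zero_zmod_pow (p : ℕ) [NeZero p] {m n : ℕ} (hm : m ≤ n) :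
    Nat.card {z : ZMod (p ^ n) // (p : ZMod (p ^ n)) ^ m * z = 0} = p ^ m := by
  have hcard := card_natCast_mul_eq_zero_zmod (p ^ n) (p ^ m)
  rwa [Nat.gcd_eq_right (pow_dvd_pow p hm), Nat.cast_pow] at hcard

end ZMod

/-- For `P(x) = ax² + bx + c` over `ℤ/2^r` with `a = 2^m q`, `b = 2^m g`
(`q, g` units, `m < r`): if `2^{m+1} ∣ y - c` then `P(x) = y` has exactly `2^{m+1}`
solutions, otherwise none. -/
theorem stmt_15 (r m : ℕ) (hr : 1 ≤ r) (hm : m < r)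
    (a b c : ZMod (2 ^ r)) (q g : (ZMod (2 ^ r))ˣ)
    (ha : a = (2 : ZMod (2 ^ r)) ^ m * (q : ZMod (2 ^ r)))
    (hb : b = (2 : ZMod (2 ^ r)) ^ m * (g : ZMod (2 ^ r)))
    (y : ZMod (2 ^ r)) :
    ((∃ c' : ZMod (2 ^ r), y - c = (2 : ZMod (2 ^ r)) ^ (m + 1) * c') →
      Nat.card {x : ZMod (2 ^ r) // a * x ^ 2 + b * x + c = y} = 2 ^ (m + 1)) ∧
    ((¬ ∃ c' : ZMod (2 ^ r), y - c = (2 : ZMod (2 ^ r)) ^ (m + 1) * c') →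
      Nat.card {x : ZMod (2 ^ r) // a * x ^ 2 + b * x + c = y} = 0) := by
  have := isLocalHom_castHom_zmod_pow 2 hm.ne_bot
  have count := stmt_15_general (ZMod.castHom (dvd_pow_self 2 hm.ne_bot) (ZMod 2))
    (natCast_pow_ne_zero_zmod_pow one_lt_two hm) a b c q g (mod_cast ha) (mod_cast hb) y
  rwa [exists_castHom_eq_zero_and_eq_pow_mul_iff, card_natCast_pow_mul_eq_zero_zmod_pow 2 hm.le,
    ← pow_succ'] at count
end
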